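/- arXiv:2307.15564 — 8 statements merged into one kernel-verified Lean document; each statement's English description precedes it below -/
import Mathlib

section
/- Let U ⊆ ℝⁿ be open with coordinates x = (x¹,…,xⁿ), let g₁,…,gₙ, K₁,…,Kₙ : U → ℝ be smooth, and let ε₁,…,εₙ ∈ {−1,1}. Define H, F : U × ℝⁿ → ℝ by H(x,p) = (1/2)·Σᵢ εᵢ·exp(gᵢ(x))·pᵢ² and F(x,p) = Σᵢ εᵢ·exp(gᵢ(x))·Kᵢ(x)·pᵢ². Then the canonical Poisson bracket satisfies, for all (x,p) ∈ U × ℝⁿ: {H,F}(x,p) = Σᵢ exp(2gᵢ(x))·(∂Kᵢ/∂xⁱ)(x)·pᵢ³ + Σ_{i≠j} εᵢεⱼ·exp(gᵢ(x)+gⱼ(x))·( (Kᵢ(x)−Kⱼ(x))·(∂gᵢ/∂xʲ)(x) + (∂Kᵢ/∂xʲ)(x) )·pᵢ²·pⱼ. -/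
open scoped BigOperators

/-- Partial derivative of `f : ℝⁿ → ℝ` in the `j`-th coordinate direction. -/
noncomputable def pd {n : ℕ} (f : (Fin n → ℝ) → ℝ) (j : Fin n) (x : Fin n → ℝ) : ℝ :=
  fderiv ℝ f x (Pi.single j 1)

/-- The canonical Poisson bracket of two functions on `ℝⁿ × ℝⁿ` (positions `x`, momenta `p`):
`{H,F} = Σ_s (∂H/∂p_s · ∂F/∂x^s − ∂H/∂x^s · ∂F/∂p_s)`. -/
noncomputable def poisson {n : ℕ} (H F : ((Fin n → ℝ) × (Fin n → ℝ)) → ℝ)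
    (q : (Fin n → ℝ) × (Fin n → ℝ)) : ℝ :=
  ∑ s : Fin n,
    (fderiv ℝ H q ((0 : Fin n → ℝ), Pi.single s 1) * fderiv ℝ F q (Pi.single s 1, (0 : Fin n → ℝ))
      - fderiv ℝ H q (Pi.single s 1, (0 : Fin n → ℝ)) *
          fderiv ℝ F q ((0 : Fin n → ℝ), Pi.single s 1))

theorem quad_fderiv {n : ℕ} (A : Fin n → (Fin n → ℝ) → ℝ) (x p v w : Fin n → ℝ)
    (hA : ∀ i, DifferentiableAt ℝ (A i) x) (c : ℝ) :
    fderiv ℝ (fun q : (Fin n → ℝ) × (Fin n → ℝ) => c * ∑ i, A i q.1 * (q.2 i) ^ 2) (x, p) (v, w)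
      = c * ∑ i, (fderiv ℝ (A i) x v * (p i) ^ 2 + A i x * (2 * p i * w i)) := by
  have h1 : ∀ i, HasFDerivAt (fun q : (Fin n → ℝ) × (Fin n → ℝ) => A i q.1)
      ((fderiv ℝ (A i) x).comp (ContinuousLinearMap.fst ℝ (Fin n → ℝ) (Fin n → ℝ))) (x, p) :=
    fun i => HasFDerivAt.comp (x, p) (f := Prod.fst) (hA i).hasFDerivAt hasFDerivAt_fst
  have h2 : ∀ i, HasFDerivAt (fun q : (Fin n → ℝ) × (Fin n → ℝ) => q.2 i)
      ((ContinuousLinearMap.proj (R := ℝ) (φ := fun _ : Fin n => ℝ) i).comp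
        (ContinuousLinearMap.snd ℝ (Fin n → ℝ) (Fin n → ℝ))) (x, p) :=
    fun i => ((ContinuousLinearMap.proj (R := ℝ) (φ := fun _ : Fin n => ℝ) i).comp
        (ContinuousLinearMap.snd ℝ (Fin n → ℝ) (Fin n → ℝ))).hasFDerivAt
  have h3 := (HasFDerivAt.fun_sum (u := Finset.univ)
    (fun i _ => (h1 i).mul ((h2 i).pow 2))).const_mul c
  have h4 := h3.fderiv
  simp only [Pi.mul_apply, Pi.pow_apply] at h4
  erw [h4]
  simp only [ContinuousLinearMap.smul_apply, ContinuousLinearMap.sum_apply,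
    ContinuousLinearMap.add_apply, ContinuousLinearMap.comp_apply,
    ContinuousLinearMap.coe_fst', ContinuousLinearMap.coe_snd', ContinuousLinearMap.proj_apply,
    smul_eq_mul]
  congr 1
  refine Finset.sum_congr rfl fun i _ => ?_
  simp
  ring

theorem poisson_bracket_formula {n : ℕ} (U : Set (Fin n → ℝ)) (hU : IsOpen U)
    (g K : Fin n → (Fin n → ℝ) → ℝ)
    (hg : ∀ i, ContDiffOn ℝ (⊤ : ℕ∞) (g i) U) (hK : ∀ i, ContDiffOn ℝ (⊤ : ℕ∞) (K i) U)
    (ε : Fin n → ℝ) (hε : ∀ i, ε i = 1 ∨ ε i = -1) :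
    ∀ x ∈ U, ∀ p : Fin n → ℝ,
      poisson
        (fun q => (1 / 2 : ℝ) * ∑ i, ε i * Real.exp (g i q.1) * (q.2 i) ^ 2)
        (fun q => ∑ i, ε i * Real.exp (g i q.1) * K i q.1 * (q.2 i) ^ 2) (x, p) =
      (∑ i, Real.exp (2 * g i x) * pd (K i) i x * (p i) ^ 3)
        + ∑ i, ∑ j ∈ Finset.univ.filter (fun j => j ≠ i),
            ε i * ε j * Real.exp (g i x + g j x) *
              ((K i x - K j x) * pd (g i) j x + pd (K i) j x) * (p i) ^ 2 * p j := by
  intro x hx p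
  have dg : ∀ i, DifferentiableAt ℝ (g i) x := fun i =>
    ((hg i).contDiffAt (hU.mem_nhds hx)).differentiableAt (by simp)
  have dK : ∀ i, DifferentiableAt ℝ (K i) x := fun i =>
    ((hK i).contDiffAt (hU.mem_nhds hx)).differentiableAt (by simp)
  have hA : ∀ i, HasFDerivAt (fun y => ε i * Real.exp (g i y))
      (ε i • (Real.exp (g i x) • fderiv ℝ (g i) x)) x := fun i =>
    ((dg i).hasFDerivAt.exp).const_mul (ε i)
  have hB : ∀ i, HasFDerivAt (fun y => ε i * Real.exp (g i y) * K i y)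
      ((ε i * Real.exp (g i x)) • fderiv ℝ (K i) x
        + K i x • (ε i • (Real.exp (g i x) • fderiv ℝ (g i) x))) x := fun i =>
    (hA i).mul (dK i).hasFDerivAt
  have fH := fun v w => quad_fderiv (fun i y => ε i * Real.exp (g i y)) x p v w
    (fun i => (hA i).differentiableAt) (1 / 2)
  have fF := fun v w => quad_fderiv (fun i y => ε i * Real.exp (g i y) * K i y) x p v w
    (fun i => (hB i).differentiableAt) 1
  simp only [one_mul] at fF
  simp only [fun i => (hA i).fderiv] at fH
  simp only [fun i => (hB i).fderiv] at fF
  unfold poisson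
  simp only [fH, fF]
  simp only [ContinuousLinearMap.smul_apply, ContinuousLinearMap.add_apply, smul_eq_mul,
    map_zero, ← pd.eq_1, Pi.zero_apply, mul_zero, add_zero, zero_mul, zero_add]
  have hs : ∀ (f : Fin n → ℝ) (s : Fin n),
      ∑ i, f i * (2 * p i * (Pi.single s (1 : ℝ) : Fin n → ℝ) i) = f s * (2 * p s) := by
    intro f s
    rw [Finset.sum_eq_single s]
    · simp
    · intro b _ hb
      simp [Pi.single_eq_of_ne hb]
    · simp
  simp only [hs]
  have e2 : ∀ i, ε i * ε i = 1 := fun i => by rcases hε i with h | h <;> simp [h]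
  have hsplit : ∀ i, Real.exp (2 * g i x) * pd (K i) i x * (p i) ^ 3
        + ∑ j ∈ Finset.univ.filter (fun j => j ≠ i),
            ε i * ε j * Real.exp (g i x + g j x) *
              ((K i x - K j x) * pd (g i) j x + pd (K i) j x) * (p i) ^ 2 * p j
      = ∑ j, ε i * ε j * Real.exp (g i x + g j x) *
              ((K i x - K j x) * pd (g i) j x + pd (K i) j x) * (p i) ^ 2 * p j := by
    intro i
    rw [Finset.filter_ne', ← Finset.add_sum_erase _ _ (Finset.mem_univ i), e2 i, two_mul]
    ring
  rw [← Finset.sum_add_distrib]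
  simp only [hsplit]
  rw [Finset.sum_comm]
  refine Finset.sum_congr rfl fun s _ => ?_
  rw [Finset.mul_sum, Finset.mul_sum, Finset.sum_mul, ← Finset.sum_sub_distrib]
  refine Finset.sum_congr rfl fun i _ => ?_
  rw [Real.exp_add]
  ring
end

section
/- Let U ⊆ ℝⁿ be open with coordinates x = (x¹,…,xⁿ), let g₁,…,gₙ, K₁,…,Kₙ : U → ℝ be smooth, and let ε₁,…,εₙ ∈ {−1,1}. Define H(x,p) = (1/2)·Σᵢ εᵢ·exp(gᵢ(x))·pᵢ² and F(x,p) = Σᵢ εᵢ·exp(gᵢ(x))·Kᵢ(x)·pᵢ². If {H,F}(x,p) = 0 for all (x,p) ∈ U × ℝⁿ, then for every index i the weak nonlinearity condition holds: (∂Kᵢ/∂xⁱ)(x) = 0 for all x ∈ U. -/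
open scoped BigOperators

theorem fderiv_quad_aux {n : ℕ} (A : Fin n → (Fin n → ℝ) → ℝ) (x p v w : Fin n → ℝ)
    (hA : ∀ i, DifferentiableAt ℝ (A i) x) :
    HasFDerivAt (fun q : (Fin n → ℝ) × (Fin n → ℝ) => ∑ i, A i q.1 * (q.2 i) ^ 2)
      (fderiv ℝ (fun q : (Fin n → ℝ) × (Fin n → ℝ) => ∑ i, A i q.1 * (q.2 i) ^ 2) (x, p)) (x, p) ∧
    fderiv ℝ (fun q : (Fin n → ℝ) × (Fin n → ℝ) => ∑ i, A i q.1 * (q.2 i) ^ 2) (x, p) (v, w)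
      = ∑ i, (fderiv ℝ (A i) x v * (p i) ^ 2 + A i x * (2 * p i * w i)) := by
  have h : HasFDerivAt (fun q : (Fin n → ℝ) × (Fin n → ℝ) => ∑ i, A i q.1 * (q.2 i) ^ 2)
      _ (x, p) := HasFDerivAt.fun_sum (u := Finset.univ) (fun i _ =>
        (((hA i).hasFDerivAt.comp (x, p) (hasFDerivAt_fst (𝕜 := ℝ) (p := (x, p)))).mul
          ((((ContinuousLinearMap.proj (R := ℝ) (φ := fun _ : Fin n => ℝ) i).comp
            (ContinuousLinearMap.snd ℝ (Fin n → ℝ) (Fin n → ℝ))).hasFDerivAt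
              (x := (x, p))).pow 2)))
  refine ⟨h.differentiableAt.hasFDerivAt, ?_⟩
  rw [h.fderiv, ContinuousLinearMap.sum_apply]
  refine Finset.sum_congr rfl fun i _ => ?_
  simp
  ring

theorem weak_nonlinearity_of_poisson_commute {n : ℕ} (U : Set (Fin n → ℝ)) (hU : IsOpen U)
    (g K : Fin n → (Fin n → ℝ) → ℝ)
    (hg : ∀ i, ContDiffOn ℝ (⊤ : ℕ∞) (g i) U) (hK : ∀ i, ContDiffOn ℝ (⊤ : ℕ∞) (K i) U)
    (ε : Fin n → ℝ) (hε : ∀ i, ε i = 1 ∨ ε i = -1)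
    (hbracket : ∀ x ∈ U, ∀ p : Fin n → ℝ,
      poisson
        (fun q => (1 / 2 : ℝ) * ∑ i, ε i * Real.exp (g i q.1) * (q.2 i) ^ 2)
        (fun q => ∑ i, ε i * Real.exp (g i q.1) * K i q.1 * (q.2 i) ^ 2) (x, p) = 0) :
    ∀ i : Fin n, ∀ x ∈ U, pd (K i) i x = 0 := by
  intro i x hx
  have hgd : ∀ j, DifferentiableAt ℝ (g j) x := fun j =>
    ((hg j).contDiffAt (hU.mem_nhds hx)).differentiableAt (by simp)
  have hKd : ∀ j, DifferentiableAt ℝ (K j) x := fun j =>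
    ((hK j).contDiffAt (hU.mem_nhds hx)).differentiableAt (by simp)
  have hA : ∀ j, HasFDerivAt (fun y => ε j * Real.exp (g j y))
      (ε j • Real.exp (g j x) • fderiv ℝ (g j) x) x := fun j =>
    ((hgd j).hasFDerivAt.exp).const_mul (ε j)
  have hB : ∀ j, HasFDerivAt (fun y => ε j * Real.exp (g j y) * K j y) _ x := fun j =>
    (hA j).mul (hKd j).hasFDerivAt
  have hb := hbracket x hx (Pi.single i 1)
  have eA := fun v w => fderiv_quad_aux (fun j y => ε j * Real.exp (g j y)) x (Pi.single i 1) v w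
    (fun j => (hA j).differentiableAt)
  have eB := fun v w => fderiv_quad_aux (fun j y => ε j * Real.exp (g j y) * K j y) x
    (Pi.single i 1) v w (fun j => (hB j).differentiableAt)
  unfold poisson at hb
  rw [((eA 0 0).1.const_mul (1 / 2 : ℝ)).fderiv] at hb
  simp only [ContinuousLinearMap.smul_apply, (eA _ _).2, (eB _ _).2, (hA _).fderiv,
    (hB _).fderiv] at hb
  have hs : ∀ (a b : Fin n → ℝ), ∑ j, (a j * (Pi.single i (1 : ℝ) : Fin n → ℝ) j ^ 2
      + b j * (2 * (Pi.single i (1 : ℝ) : Fin n → ℝ) j * 0)) = a i := by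
    intro a b
    simp [Pi.single_apply]
  have ht : ∀ (s : Fin n) (b : Fin n → ℝ), ∑ j, b j * (2 * (Pi.single i (1 : ℝ) : Fin n → ℝ) j *
      (Pi.single s (1 : ℝ) : Fin n → ℝ) j) = if i = s then 2 * b i else 0 := by
    intro s b
    rw [Finset.sum_eq_single i]
    · simp [Pi.single_apply]; split_ifs <;> ring
    · intro j _ hj
      simp [hj]
    · simp
  simp only [map_zero, smul_zero, zero_mul, zero_add, Pi.zero_apply, hs, ht] at hb
  rw [Finset.sum_eq_single i] at hb
  · simp at hb
    unfold pd
    have hne : ε i * Real.exp (g i x) ≠ 0 :=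
      mul_ne_zero (by rcases hε i with h | h <;> simp [h]) (Real.exp_pos _).ne'
    have : (ε i * Real.exp (g i x)) ^ 2 * fderiv ℝ (K i) x (Pi.single i 1) = 0 := by
      linear_combination hb
    exact (mul_eq_zero.mp this).resolve_left (pow_ne_zero 2 hne)
  · intro s _ hsi
    simp [Ne.symm hsi]
  · simp
end

section
/- Let U ⊆ ℝⁿ be open with coordinates x = (x¹,…,xⁿ), let g₁,…,gₙ, K₁,…,Kₙ : U → ℝ be smooth with Kᵢ(x) ≠ Kⱼ(x) for all i ≠ j and all x ∈ U, and let ε₁,…,εₙ ∈ {−1,1}. Define H(x,p) = (1/2)·Σᵢ εᵢ·exp(gᵢ(x))·pᵢ² and F(x,p) = Σᵢ εᵢ·exp(gᵢ(x))·Kᵢ(x)·pᵢ². If {H,F}(x,p) = 0 for all (x,p) ∈ U × ℝⁿ, then for all i ≠ j and all x ∈ U: (∂gᵢ/∂xʲ)(x) = (Kⱼ(x) − Kᵢ(x))⁻¹ · (∂Kᵢ/∂xʲ)(x). -/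
open scoped BigOperators

theorem hasFDerivAt_quad {n : ℕ} (A : Fin n → (Fin n → ℝ) → ℝ) (x p : Fin n → ℝ)
    (hA : ∀ i, DifferentiableAt ℝ (A i) x) (v w : Fin n → ℝ) :
    fderiv ℝ (fun q : (Fin n → ℝ) × (Fin n → ℝ) => ∑ i, A i q.1 * (q.2 i) ^ 2) (x, p) (v, w)
      = ∑ i, (fderiv ℝ (A i) x v * p i ^ 2 + A i x * (2 * p i * w i)) := by
  have h1 : ∀ i, HasFDerivAt (fun q : (Fin n → ℝ) × (Fin n → ℝ) => A i q.1)
      ((fderiv ℝ (A i) x).comp (ContinuousLinearMap.fst ℝ (Fin n → ℝ) (Fin n → ℝ))) (x, p) :=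
    fun i => HasFDerivAt.comp (x, p) (f := Prod.fst) (hA i).hasFDerivAt hasFDerivAt_fst
  have h2 : ∀ i, HasFDerivAt (fun q : (Fin n → ℝ) × (Fin n → ℝ) => q.2 i)
      ((ContinuousLinearMap.proj (R := ℝ) (φ := fun _ : Fin n => ℝ) i).comp
        (ContinuousLinearMap.snd ℝ (Fin n → ℝ) (Fin n → ℝ))) (x, p) :=
    fun i => ((ContinuousLinearMap.proj (R := ℝ) (φ := fun _ : Fin n => ℝ) i).comp
        (ContinuousLinearMap.snd ℝ (Fin n → ℝ) (Fin n → ℝ))).hasFDerivAt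
  have h3 := HasFDerivAt.fun_sum (u := Finset.univ) (fun i _ => (h1 i).mul ((h2 i).pow 2))
  have h4 := h3.fderiv
  simp only [Pi.mul_apply, Pi.pow_apply] at h4
  erw [h4]
  simp only [ContinuousLinearMap.sum_apply]
  refine Finset.sum_congr rfl fun i _ => ?_
  simp
  ring

theorem coeff_zero {n : ℕ} (C : Fin n → Fin n → ℝ)
    (h : ∀ p : Fin n → ℝ, ∑ s, p s * ∑ i, C s i * p i ^ 2 = 0) (i j : Fin n) (hij : i ≠ j) :
    C j i = 0 := by
  have key : ∀ t : ℝ, (C i i + C i j * t ^ 2) + t * (C j i + C j j * t ^ 2) = 0 := by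
    intro t
    have h0 := h (fun k => (if k = i then 1 else 0) + (if k = j then t else 0))
    have hsq : ∀ k : Fin n, ((if k = i then (1:ℝ) else 0) + (if k = j then t else 0)) ^ 2
        = (if k = i then (1:ℝ) else 0) + (if k = j then t ^ 2 else 0) := by
      intro k
      by_cases h1 : k = i
      · subst h1; simp [hij]
      · by_cases h2 : k = j <;> simp [h1, h2, hij.symm]
    simp only [hsq] at h0
    simp [mul_add, add_mul, Finset.sum_add_distrib, Finset.mul_sum] at h0
    linarith
  have a := key 1
  have b := key (-1)
  have c := key 2
  have d := key (-2)
  linarith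

theorem metric_equation_of_poisson_commute {n : ℕ} (U : Set (Fin n → ℝ)) (hU : IsOpen U)
    (g K : Fin n → (Fin n → ℝ) → ℝ)
    (hg : ∀ i, ContDiffOn ℝ (⊤ : ℕ∞) (g i) U) (hK : ∀ i, ContDiffOn ℝ (⊤ : ℕ∞) (K i) U)
    (hdist : ∀ i j : Fin n, i ≠ j → ∀ x ∈ U, K i x ≠ K j x)
    (ε : Fin n → ℝ) (hε : ∀ i, ε i = 1 ∨ ε i = -1)
    (hbracket : ∀ x ∈ U, ∀ p : Fin n → ℝ,
      poisson
        (fun q => (1 / 2 : ℝ) * ∑ i, ε i * Real.exp (g i q.1) * (q.2 i) ^ 2)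
        (fun q => ∑ i, ε i * Real.exp (g i q.1) * K i q.1 * (q.2 i) ^ 2) (x, p) = 0) :
    ∀ i j : Fin n, i ≠ j → ∀ x ∈ U,
      pd (g i) j x = (K j x - K i x)⁻¹ * pd (K i) j x := by
  intro i j hij x hx
  have hgd : ∀ i, DifferentiableAt ℝ (g i) x := fun i =>
    ((hg i).contDiffAt (hU.mem_nhds hx)).differentiableAt (by simp)
  have hKd : ∀ i, DifferentiableAt ℝ (K i) x := fun i =>
    ((hK i).contDiffAt (hU.mem_nhds hx)).differentiableAt (by simp)
  have hA : ∀ i, HasFDerivAt (fun y => (1 / 2 : ℝ) * (ε i * Real.exp (g i y)))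
      ((1 / 2 : ℝ) • (ε i • (Real.exp (g i x) • fderiv ℝ (g i) x))) x := fun i =>
    (((hgd i).hasFDerivAt.exp).const_mul (ε i)).const_mul (1 / 2 : ℝ)
  have hB : ∀ i, HasFDerivAt (fun y => ε i * Real.exp (g i y) * K i y)
      ((ε i * Real.exp (g i x)) • fderiv ℝ (K i) x
        + K i x • (ε i • (Real.exp (g i x) • fderiv ℝ (g i) x))) x := fun i =>
    (((hgd i).hasFDerivAt.exp).const_mul (ε i)).mul (hKd i).hasFDerivAt
  have hH : (fun q : (Fin n → ℝ) × (Fin n → ℝ) =>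
      (1 / 2 : ℝ) * ∑ i, ε i * Real.exp (g i q.1) * (q.2 i) ^ 2)
      = fun q => ∑ i, (fun y => (1 / 2 : ℝ) * (ε i * Real.exp (g i y))) q.1 * (q.2 i) ^ 2 := by
    funext q
    rw [Finset.mul_sum]
    exact Finset.sum_congr rfl fun i _ => by ring
  have hC := coeff_zero (fun s i => (ε s * Real.exp (g s x)) * (ε i * Real.exp (g i x)) *
      (pd (g i) s x * (K i x - K s x) + pd (K i) s x)) (by
    intro p
    have h := hbracket x hx p
    rw [hH] at h
    unfold poisson at h
    rw [← h]
    refine Finset.sum_congr rfl fun s _ => ?_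
    have e1 := hasFDerivAt_quad (fun i y => (1 / 2 : ℝ) * (ε i * Real.exp (g i y))) x p
      (fun i => (hA i).differentiableAt)
    have e2 := hasFDerivAt_quad (fun i y => ε i * Real.exp (g i y) * K i y) x p
      (fun i => (hB i).differentiableAt)
    simp only [fun i => (hA i).fderiv] at e1
    simp only [fun i => (hB i).fderiv] at e2
    rw [e1, e1, e2, e2]
    have z1 : ∀ f : Fin n → ℝ, ∑ k, (f k * (2 * p k * (Pi.single s (1:ℝ) : Fin n → ℝ) k))
        = f s * (2 * p s) := by
      intro f
      simp [Pi.single_apply]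
    simp only [map_zero, zero_mul, zero_add, z1, Pi.zero_apply, mul_zero, add_zero]
    rw [Finset.mul_sum, Finset.mul_sum, Finset.sum_mul, ← Finset.sum_sub_distrib]
    refine Finset.sum_congr rfl fun k _ => ?_
    simp only [pd, add_apply, smul_apply, smul_eq_mul]
    ring) i j hij
  have hne : ∀ k, ε k * Real.exp (g k x) ≠ 0 := by
    intro k
    refine mul_ne_zero ?_ (Real.exp_ne_zero _)
    rcases hε k with h | h <;> rw [h] <;> norm_num
  have h0 := (mul_eq_zero.mp hC).resolve_left (mul_ne_zero (hne j) (hne i))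
  have hd : K j x - K i x ≠ 0 := sub_ne_zero.mpr (hdist j i hij.symm x hx)
  rw [eq_inv_mul_iff_mul_eq₀ hd]
  linarith
end

section
/- Let U ⊆ ℝⁿ be open with coordinates x = (x¹,…,xⁿ), let g₁,…,gₙ, K₁,…,Kₙ : U → ℝ be smooth, and let ε₁,…,εₙ ∈ {−1,1}. Define H(x,p) = (1/2)·Σᵢ εᵢ·exp(gᵢ(x))·pᵢ² and F(x,p) = Σᵢ εᵢ·exp(gᵢ(x))·Kᵢ(x)·pᵢ². Suppose that for all i: (∂Kᵢ/∂xⁱ)(x) = 0 on U, and that for all i ≠ j and all x ∈ U: (Kᵢ(x) − Kⱼ(x))·(∂gᵢ/∂xʲ)(x) + (∂Kᵢ/∂xʲ)(x) = 0. Then {H,F}(x,p) = 0 for all (x,p) ∈ U × ℝⁿ. -/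
open scoped BigOperators

theorem quad_hasFDerivAt {n : ℕ} (a : Fin n → (Fin n → ℝ) → ℝ) (x p : Fin n → ℝ)
    (aderiv : Fin n → ((Fin n → ℝ) →L[ℝ] ℝ)) (ha : ∀ i, HasFDerivAt (a i) (aderiv i) x) :
    HasFDerivAt (fun q : (Fin n → ℝ) × (Fin n → ℝ) => ∑ i, a i q.1 * (q.2 i) ^ 2)
      (∑ i, (a i x • ((2 * p i) • (ContinuousLinearMap.proj (R := ℝ) (φ := fun _ : Fin n => ℝ) i).comp
          (ContinuousLinearMap.snd ℝ (Fin n → ℝ) (Fin n → ℝ)))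
        + (p i ^ 2) • (aderiv i).comp (ContinuousLinearMap.fst ℝ (Fin n → ℝ) (Fin n → ℝ)))) (x, p) := by
  apply HasFDerivAt.fun_sum
  intro i _
  have h1 : HasFDerivAt (fun q : (Fin n → ℝ) × (Fin n → ℝ) => a i q.1)
      ((aderiv i).comp (ContinuousLinearMap.fst ℝ (Fin n → ℝ) (Fin n → ℝ))) (x, p) :=
    HasFDerivAt.comp (g := a i) (x, p) (ha i) hasFDerivAt_fst
  have h2 : HasFDerivAt (fun q : (Fin n → ℝ) × (Fin n → ℝ) => q.2 i)
      ((ContinuousLinearMap.proj (R := ℝ) (φ := fun _ : Fin n => ℝ) i).comp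
          (ContinuousLinearMap.snd ℝ (Fin n → ℝ) (Fin n → ℝ))) (x, p) :=
    ((ContinuousLinearMap.proj (R := ℝ) (φ := fun _ : Fin n => ℝ) i).comp
          (ContinuousLinearMap.snd ℝ (Fin n → ℝ) (Fin n → ℝ))).hasFDerivAt
  have h3 := h1.mul (h2.pow 2)
  refine h3.congr_fderiv ?_
  simp

theorem poisson_commute_of_conditions {n : ℕ} (U : Set (Fin n → ℝ)) (hU : IsOpen U)
    (g K : Fin n → (Fin n → ℝ) → ℝ)
    (hg : ∀ i, ContDiffOn ℝ (⊤ : ℕ∞) (g i) U) (hK : ∀ i, ContDiffOn ℝ (⊤ : ℕ∞) (K i) U)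
    (ε : Fin n → ℝ) (hε : ∀ i, ε i = 1 ∨ ε i = -1)
    (hwnl : ∀ i : Fin n, ∀ x ∈ U, pd (K i) i x = 0)
    (hmetric : ∀ i j : Fin n, i ≠ j → ∀ x ∈ U,
      (K i x - K j x) * pd (g i) j x + pd (K i) j x = 0) :
    ∀ x ∈ U, ∀ p : Fin n → ℝ,
      poisson
        (fun q => (1 / 2 : ℝ) * ∑ i, ε i * Real.exp (g i q.1) * (q.2 i) ^ 2)
        (fun q => ∑ i, ε i * Real.exp (g i q.1) * K i q.1 * (q.2 i) ^ 2) (x, p) = 0 := by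
  intro x hx p
  have dg : ∀ i, HasFDerivAt (g i) (fderiv ℝ (g i) x) x := fun i =>
    (((hg i).contDiffAt (hU.mem_nhds hx)).differentiableAt (by simp)).hasFDerivAt
  have dK : ∀ i, HasFDerivAt (K i) (fderiv ℝ (K i) x) x := fun i =>
    (((hK i).contDiffAt (hU.mem_nhds hx)).differentiableAt (by simp)).hasFDerivAt
  have da : ∀ i, HasFDerivAt (fun y => ε i * Real.exp (g i y)) _ x := fun i =>
    (dg i).exp.const_mul (ε i)
  have db : ∀ i, HasFDerivAt (fun y => ε i * Real.exp (g i y) * K i y) _ x := fun i =>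
    (da i).mul (dK i)
  have hH := (quad_hasFDerivAt _ x p _ da).const_mul (1 / 2 : ℝ)
  have hF := quad_hasFDerivAt _ x p _ db
  unfold poisson
  rw [hH.fderiv, hF.fderiv]
  apply Finset.sum_eq_zero
  intro s _
  have key : ∀ i, (K i x - K s x) * fderiv ℝ (g i) x (Pi.single s 1)
      + fderiv ℝ (K i) x (Pi.single s 1) = 0 := by
    intro i
    by_cases h : i = s
    · subst h
      have := hwnl i x hx
      unfold pd at this
      simp [this]
    · exact hmetric i s h x hx
  have key2 : ∀ i, fderiv ℝ (K i) x (Pi.single s 1) =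
      (K s x - K i x) * fderiv ℝ (g i) x (Pi.single s 1) := fun i => by linarith [key i]
  simp [Pi.single_apply, key2]
  simp only [Finset.mul_sum, Finset.sum_mul]
  rw [← Finset.sum_sub_distrib]
  apply Finset.sum_eq_zero
  intro i _
  ring
end

section
/- Let U ⊆ ℝⁿ be a convex open set and let K₁,…,Kₙ : U → ℝ be smooth with Kᵢ(x) ≠ Kⱼ(x) for all i ≠ j and all x ∈ U. Suppose K₁,…,Kₙ satisfy the semi-Hamiltonian (Tsarev) conditions on U. Then for every index i there exists a smooth function gᵢ : U → ℝ such that for all j ≠ i and all x ∈ U: (∂gᵢ/∂xʲ)(x) = (Kⱼ(x) − Kᵢ(x))⁻¹ · (∂Kᵢ/∂xʲ)(x). -/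
open scoped BigOperators

/-- The semi-Hamiltonian (Tsarev) conditions for functions `K₁,…,Kₙ` on `U ⊆ ℝⁿ`:
for all pairwise distinct `i, j, k` and all `x ∈ U`,
`∂/∂xᵏ( (Kⱼ − Kᵢ)⁻¹ ∂Kᵢ/∂xʲ ) = ∂/∂xʲ( (Kₖ − Kᵢ)⁻¹ ∂Kᵢ/∂xᵏ )`. -/
def SemiHamiltonian {n : ℕ} (K : Fin n → (Fin n → ℝ) → ℝ) (U : Set (Fin n → ℝ)) : Prop :=
  ∀ i j k : Fin n, i ≠ j → j ≠ k → i ≠ k → ∀ x ∈ U,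
    pd (fun y => (K j y - K i y)⁻¹ * pd (K i) j y) k x
      = pd (fun y => (K k y - K i y)⁻¹ * pd (K i) k y) j x

open Set Topology
open scoped Manifold ContDiff Interval

theorem aux_hasFDerivAt {E G : Type} [NormedAddCommGroup E] [NormedSpace ℝ E]
    [FiniteDimensional ℝ E] [NormedAddCommGroup G] [NormedSpace ℝ G] [CompleteSpace G]
    {U : Set E} (hU : IsOpen U) {W : Set (E × ℝ)} (hW : IsOpen W)
    (hUW : U ×ˢ Icc (0:ℝ) 1 ⊆ W) {F : E × ℝ → G} (hF : ContDiffOn ℝ 1 F W)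
    {x : E} (hx : x ∈ U) :
    HasFDerivAt (fun x => ∫ t in (0:ℝ)..1, F (x, t))
      (∫ t in (0:ℝ)..1, (fderiv ℝ F (x, t)).comp (ContinuousLinearMap.inl ℝ E ℝ)) x := by
  have hdF : ContinuousOn (fun p => (fderiv ℝ F p).comp (ContinuousLinearMap.inl ℝ E ℝ)) W := by
    have := hF.continuousOn_fderiv_of_isOpen hW le_rfl
    exact this.clm_comp continuousOn_const
  obtain ⟨r, hr, hrU⟩ := Metric.nhds_basis_closedBall.mem_iff.1 (hU.mem_nhds hx)
  have hcomp : IsCompact (Metric.closedBall x r ×ˢ Icc (0:ℝ) 1) :=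
    have : ProperSpace E := FiniteDimensional.proper ℝ E
    (isCompact_closedBall x r).prod isCompact_Icc
  have hsub : Metric.closedBall x r ×ˢ Icc (0:ℝ) 1 ⊆ W :=
    (prod_mono hrU subset_rfl).trans hUW
  obtain ⟨C, hC⟩ := hcomp.exists_bound_of_continuousOn (hdF.mono hsub)
  have hslice : ∀ y ∈ U, MapsTo (fun t : ℝ => (y, t)) (Icc (0:ℝ) 1) W :=
    fun y hy t ht => hUW ⟨hy, ht⟩
  have hcs : ∀ y : E, ContinuousOn (fun t : ℝ => (y, t)) (Icc (0:ℝ) 1) := fun y => by fun_prop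
  have hIoc : Ι (0:ℝ) 1 ⊆ Icc 0 1 := by
    rw [uIoc_of_le zero_le_one]; exact Ioc_subset_Icc_self
  refine intervalIntegral.hasFDerivAt_integral_of_dominated_of_fderiv_le
    (F := fun x t => F (x, t))
    (F' := fun x t => (fderiv ℝ F (x, t)).comp (ContinuousLinearMap.inl ℝ E ℝ))
    (bound := fun _ => C) (Metric.closedBall_mem_nhds x hr) ?_ ?_ ?_ ?_ ?_ ?_
  · filter_upwards [hU.mem_nhds hx] with y hy
    exact ((hF.continuousOn.comp (hcs y) (hslice y hy)).mono hIoc).aestronglyMeasurable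
      measurableSet_uIoc
  · apply ContinuousOn.intervalIntegrable
    rw [uIcc_of_le zero_le_one]
    exact hF.continuousOn.comp (hcs x) (hslice x hx)
  · exact ((hdF.comp (hcs x) (hslice x hx)).mono hIoc).aestronglyMeasurable
      measurableSet_uIoc
  · exact Filter.Eventually.of_forall fun t ht y hy => hC (y, t) ⟨hy, hIoc ht⟩
  · exact intervalIntegrable_const
  · refine Filter.Eventually.of_forall fun t ht y hy => ?_
    have hm : (y, t) ∈ W := hsub ⟨hy, hIoc ht⟩
    have h1 : HasFDerivAt F (fderiv ℝ F (y, t)) (y, t) :=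
      ((hF.differentiableOn (by simp)).differentiableAt (hW.mem_nhds hm)).hasFDerivAt
    exact h1.comp y (hasFDerivAt_prodMk_left y t)

theorem aux_contDiff_nat {E : Type} [NormedAddCommGroup E] [NormedSpace ℝ E]
    [FiniteDimensional ℝ E] {U : Set E} (hU : IsOpen U) {W : Set (E × ℝ)} (hW : IsOpen W)
    (hUW : U ×ˢ Icc (0:ℝ) 1 ⊆ W) (m : ℕ) :
    ∀ {G : Type} [NormedAddCommGroup G] [NormedSpace ℝ G] [CompleteSpace G]
    {F : E × ℝ → G}, ContDiffOn ℝ ((m + 1 : ℕ) : ℕ∞ω) F W →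
    ContDiffOn ℝ (m : ℕ∞ω) (fun x => ∫ t in (0:ℝ)..1, F (x, t)) U := by
  induction m with
  | zero =>
    intro G _ _ _ F hF
    rw [Nat.cast_zero, contDiffOn_zero]
    intro x hx
    exact (aux_hasFDerivAt hU hW hUW (by simpa using hF) hx).continuousAt.continuousWithinAt
  | succ m ih =>
    intro G _ _ _ F hF
    have hF1 : ContDiffOn ℝ 1 F W := hF.of_le (by norm_cast; omega)
    push_cast
    rw [contDiffOn_succ_iff_fderiv_of_isOpen hU]
    refine ⟨fun x hx => (aux_hasFDerivAt hU hW hUW hF1 hx).differentiableAt.differentiableWithinAt,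
      by simp, ?_⟩
    refine ContDiffOn.congr (ih (F := fun p => (fderiv ℝ F p).comp
      (ContinuousLinearMap.inl ℝ E ℝ)) ?_) fun x hx => (aux_hasFDerivAt hU hW hUW hF1 hx).fderiv
    have := hF.fderiv_of_isOpen (m := ((m + 1 : ℕ) : ℕ∞ω)) hW (by norm_cast)
    exact this.clm_comp contDiffOn_const

theorem aux_contDiff {E : Type} [NormedAddCommGroup E] [NormedSpace ℝ E]
    [FiniteDimensional ℝ E] {U : Set E} (hU : IsOpen U) {W : Set (E × ℝ)} (hW : IsOpen W)
    (hUW : U ×ˢ Icc (0:ℝ) 1 ⊆ W) 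
    {G : Type} [NormedAddCommGroup G] [NormedSpace ℝ G] [CompleteSpace G]
    {F : E × ℝ → G} (hF : ContDiffOn ℝ ∞ F W) :
    ContDiffOn ℝ ∞ (fun x => ∫ t in (0:ℝ)..1, F (x, t)) U := by
  rw [contDiffOn_infty]
  intro m
  exact aux_contDiff_nat hU hW hUW m (hF.of_le (by exact_mod_cast le_top))

/-- A smooth section of the `i`-th coordinate projection of an open convex set. -/
theorem aux_section {n : ℕ} {U : Set (Fin n → ℝ)} (hU : IsOpen U) (hconv : Convex ℝ U)
    (i : Fin n) : ∃ σ : ℝ → (Fin n → ℝ), ContDiffOn ℝ ∞ σ ((fun x => x i) '' U) ∧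
      ∀ x ∈ U, σ (x i) ∈ U ∧ σ (x i) i = x i := by
  have hI : IsOpen ((fun x : Fin n → ℝ => x i) '' U) := isOpenMap_eval i U hU
  let I : TopologicalSpace.Opens ℝ := ⟨_, hI⟩
  have : LocallyCompactSpace I := hI.locallyCompactSpace
  have : SigmaCompactSpace I := sigmaCompactSpace_of_locallyCompact_secondCountable
  obtain ⟨g, hg⟩ := exists_contMDiffMap_forall_mem_convex_of_local (M := I) (n := ⊤)
    (F := Fin n → ℝ) 𝓘(ℝ, ℝ) (t := fun c => {y | y ∈ U ∧ y i = c.1}) (by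
      intro c x hx y hy a b ha hb hab
      refine ⟨hconv hx.1 hy.1 ha hb hab, ?_⟩
      have h1 := hx.2
      have h2 := hy.2
      simp only [Pi.add_apply, Pi.smul_apply, smul_eq_mul, h1, h2]
      rw [← add_mul, hab, one_mul]) (by
      rintro ⟨c, p, hp, rfl⟩
      have hup : ContDiff ℝ ∞ (fun c : ℝ => Function.update p i c) := contDiff_update _ p i
      refine ⟨{c | Function.update p i c.1 ∈ U}, ?_, fun c => Function.update p i c.1, ?_, ?_⟩
      · refine ContinuousAt.preimage_mem_nhds
          (f := fun c : I => Function.update p i c.1) ?_ (hU.mem_nhds ?_)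
        · exact (hup.continuous.comp continuous_subtype_val).continuousAt
        · simpa using hp
      · exact (hup.contMDiff.comp contMDiff_subtype_val).contMDiffOn
      · intro y hy
        exact ⟨hy, by simp⟩)
  classical
  refine ⟨fun c => if h : c ∈ I then g ⟨c, h⟩ else 0, ?_, ?_⟩
  · intro c hc
    apply ContDiffAt.contDiffWithinAt
    rw [← contMDiffAt_iff_contDiffAt]
    have := contMDiffAt_subtype_iff (I := 𝓘(ℝ, ℝ)) (I' := 𝓘(ℝ, Fin n → ℝ)) (n := ∞) (U := I)
      (f := fun c => if h : c ∈ I then g ⟨c, h⟩ else 0) (x := ⟨c, hc⟩)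
    rw [← this]
    refine g.contMDiff.contMDiffAt.congr_of_eventuallyEq (Filter.Eventually.of_forall ?_)
    intro y
    simp
  · intro x hx
    have hm : x i ∈ I := ⟨x, hx, rfl⟩
    simp only [hm, dif_pos]
    exact hg ⟨x i, hm⟩

theorem aux_core {n : ℕ} {U : Set (Fin n → ℝ)} (hU : IsOpen U) (hconv : Convex ℝ U)
    (i : Fin n) (b : Fin n → (Fin n → ℝ) → ℝ) (hb : ∀ j, ContDiffOn ℝ ∞ (b j) U)
    (hsym : ∀ j k, j ≠ i → k ≠ i → ∀ x ∈ U, pd (b j) k x = pd (b k) j x) :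
    ∃ g : (Fin n → ℝ) → ℝ, ContDiffOn ℝ ∞ g U ∧
      ∀ j, j ≠ i → ∀ x ∈ U, pd g j x = b j x := by
  obtain ⟨σ, hσ, hσU⟩ := aux_section hU hconv i
  let om : (Fin n → ℝ) → (Fin n → ℝ) →L[ℝ] ℝ := fun y =>
    ∑ j, b j y • (ContinuousLinearMap.proj j : (Fin n → ℝ) →L[ℝ] ℝ)
  have hω : ContDiffOn ℝ ∞ om U :=
    ContDiffOn.sum fun j _ => (hb j).smul contDiffOn_const
  have hσ' : ContDiffOn ℝ ∞ (fun x : Fin n → ℝ => σ (x i)) U :=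
    hσ.comp (contDiff_apply ℝ ℝ i).contDiffOn (fun x hx => ⟨x, hx, rfl⟩)
  let P : (Fin n → ℝ) × ℝ → (Fin n → ℝ) := fun p => σ (p.1 i) + p.2 • (p.1 - σ (p.1 i))
  have hP : ContDiffOn ℝ ∞ P (U ×ˢ univ) := by
    have h1 : ContDiffOn ℝ ∞ (fun p : (Fin n → ℝ) × ℝ => σ (p.1 i)) (U ×ˢ univ) :=
      hσ'.comp contDiff_fst.contDiffOn (fun p hp => hp.1)
    exact h1.add (contDiff_snd.contDiffOn.smul (contDiff_fst.contDiffOn.sub h1))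
  let W := (U ×ˢ (univ : Set ℝ)) ∩ P ⁻¹' U
  have hW : IsOpen W := hP.continuousOn.isOpen_inter_preimage (hU.prod isOpen_univ) hU
  have hUW : U ×ˢ Icc (0:ℝ) 1 ⊆ W := by
    rintro ⟨x, t⟩ ⟨hx, ht⟩
    exact ⟨⟨hx, mem_univ _⟩, hconv.add_smul_sub_mem (hσU x hx).1 hx ht⟩
  let F : (Fin n → ℝ) × ℝ → ℝ := fun p => om (P p) (p.1 - σ (p.1 i))
  have hF : ContDiffOn ℝ ∞ F W := by
    have h1 : ContDiffOn ℝ ∞ (fun p : (Fin n → ℝ) × ℝ => σ (p.1 i)) W :=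
      hσ'.comp contDiff_fst.contDiffOn (fun p hp => hp.1.1)
    exact (hω.comp (hP.mono inter_subset_left) (fun p hp => hp.2)).clm_apply
      (contDiff_fst.contDiffOn.sub h1)
  have hg : ContDiffOn ℝ ∞ (fun x => ∫ t in (0:ℝ)..1, F (x, t)) U := aux_contDiff hU hW hUW hF
  refine ⟨_, hg, fun j hj x hx => ?_⟩
  -- the leaf through `x`
  let S : Set (Fin n → ℝ) := U ∩ {y | y i = x i}
  have hS : Convex ℝ S := by
    refine hconv.inter ?_
    intro y hy z hz a b ha hb hab
    have h1 : y i = x i := hy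
    have h2 : z i = x i := hz
    show (a • y + b • z) i = x i
    simp only [Pi.add_apply, Pi.smul_apply, smul_eq_mul, h1, h2]
    rw [← add_mul, hab, one_mul]
  have htan : ∀ a ∈ S, ∀ v ∈ tangentConeAt ℝ S a, v i = 0 := by
    intro a ha v hv
    have h1 : HasFDerivWithinAt (fun y : Fin n → ℝ => y i)
      (ContinuousLinearMap.proj i : (Fin n → ℝ) →L[ℝ] ℝ) S a :=
      (ContinuousLinearMap.proj i : (Fin n → ℝ) →L[ℝ] ℝ).hasFDerivWithinAt
    have h2 : HasFDerivWithinAt (fun y : Fin n → ℝ => y i)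
      (0 : (Fin n → ℝ) →L[ℝ] ℝ) S a :=
      (hasFDerivWithinAt_const (x i) a S).congr (fun y hy => hy.2) ha.2
    exact HasFDerivWithinAt.unique_on h1 h2 hv
  have hpd : ∀ (f : (Fin n → ℝ) → ℝ) (y v : Fin n → ℝ),
      fderiv ℝ f y v = ∑ k, v k * pd f k y := by
    intro f y v
    have hv : v = ∑ k, v k • (Pi.single k 1 : Fin n → ℝ) := by
      ext l
      simp [Finset.sum_apply, Pi.single_apply]
    conv_lhs => rw [hv]
    simp [pd, map_sum]
  have hdω : ∀ y ∈ U, HasFDerivAt om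
      (∑ j, (fderiv ℝ (b j) y).smulRight (ContinuousLinearMap.proj j : (Fin n → ℝ) →L[ℝ] ℝ)) y := by
    intro y hy
    refine HasFDerivAt.fun_sum fun j _ => ?_
    have : HasFDerivAt (b j) (fderiv ℝ (b j) y) y :=
      (((hb j).differentiableOn (by simp)).differentiableAt (hU.mem_nhds hy)).hasFDerivAt
    exact this.smul_const (ContinuousLinearMap.proj j : (Fin n → ℝ) →L[ℝ] ℝ)
  have hprim := hS.hasFDerivWithinAt_curveIntegral_segment_of_hasFDerivWithinAt_symmetric
    (a := σ (x i)) (b := x)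
    (fun y hy => (hdω y hy.1).hasFDerivWithinAt) (by
      intro y hy v hv w hw
      have hv0 := htan y hy v hv
      have hw0 := htan y hy w hw
      simp only [_root_.sum_apply, ContinuousLinearMap.smulRight_apply,
        _root_.smul_apply, ContinuousLinearMap.proj_apply, smul_eq_mul, hpd,
        Finset.sum_mul]
      rw [Finset.sum_comm]
      refine Finset.sum_congr rfl fun k _ => Finset.sum_congr rfl fun l _ => ?_
      by_cases hk : k = i
      · subst hk; simp [hv0, hw0]
      by_cases hl : l = i
      · subst hl; simp [hv0, hw0]
      rw [hsym l k hl hk y hy.1]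
      ring) ⟨(hσU x hx).1, (hσU x hx).2⟩ ⟨hx, rfl⟩
  have hgS : HasFDerivWithinAt (fun x => ∫ t in (0:ℝ)..1, F (x, t)) (om x) S x := by
    have heq : ∀ y ∈ S, (∫ t in (0:ℝ)..1, F (y, t)) = ∫ᶜ z in .segment (σ (x i)) y, om z := by
      intro y hy
      have hyi : y i = x i := hy.2
      rw [curveIntegral_segment]
      simp only [F, P, hyi, AffineMap.lineMap_apply, vsub_eq_sub, vadd_eq_add]
      simp only [add_comm]
    exact hprim.congr heq (heq x ⟨hx, rfl⟩)
  have hgd : HasFDerivWithinAt (fun x => ∫ t in (0:ℝ)..1, F (x, t))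
      (fderiv ℝ (fun x => ∫ t in (0:ℝ)..1, F (x, t)) x) S x :=
    ((hg.differentiableOn (by simp)).differentiableAt
      (hU.mem_nhds hx)).hasFDerivAt.hasFDerivWithinAt
  have hej : (Pi.single j 1 : Fin n → ℝ) ∈ tangentConeAt ℝ S x := by
    have hcont : ContinuousAt (fun t : ℝ => x + t • (Pi.single j 1 : Fin n → ℝ)) 0 := by fun_prop
    have hev : ∀ᶠ t : ℝ in 𝓝[≠] 0, x + t • (Pi.single j 1 : Fin n → ℝ) ∈ S := by
      have : ∀ᶠ t : ℝ in 𝓝 0, x + t • (Pi.single j 1 : Fin n → ℝ) ∈ U :=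
        hcont.preimage_mem_nhds (hU.mem_nhds (by simpa using hx))
      filter_upwards [nhdsWithin_le_nhds this] with t ht
      exact ⟨ht, by simp [Pi.single_apply, Ne.symm hj]⟩
    exact mem_tangentConeAt_of_add_smul_mem (l := 𝓝[≠] (0:ℝ)) (c := id) Filter.tendsto_id hev
  have := HasFDerivWithinAt.unique_on hgd hgS hej
  rw [pd, this]
  simp [om, Pi.single_apply]

theorem exists_metric_of_semiHamiltonian {n : ℕ} (U : Set (Fin n → ℝ)) (hU : IsOpen U)
    (hconv : Convex ℝ U)
    (K : Fin n → (Fin n → ℝ) → ℝ)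
    (hK : ∀ i, ContDiffOn ℝ (⊤ : ℕ∞) (K i) U)
    (hdist : ∀ i j : Fin n, i ≠ j → ∀ x ∈ U, K i x ≠ K j x)
    (hSH : SemiHamiltonian K U) :
    ∀ i : Fin n, ∃ g : (Fin n → ℝ) → ℝ, ContDiffOn ℝ (⊤ : ℕ∞) g U ∧
      ∀ j : Fin n, j ≠ i → ∀ x ∈ U,
        pd g j x = (K j x - K i x)⁻¹ * pd (K i) j x := by
  intro i
  refine aux_core hU hconv i (fun j y => (K j y - K i y)⁻¹ * pd (K i) j y) ?_ ?_
  · intro j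
    by_cases hj : j = i
    · subst hj
      simpa using contDiffOn_const
    refine ContDiffOn.mul (((hK j).sub (hK i)).inv fun x hx => sub_ne_zero.2 (hdist j i hj x hx)) ?_
    exact ((hK i).fderiv_of_isOpen hU (by simp)).clm_apply contDiffOn_const
  · intro j k hj hk x hx
    by_cases hjk : j = k
    · rw [hjk]
    · exact hSH i j k (Ne.symm hj) hjk (Ne.symm hk) x hx
end

section
/- Let U ⊆ ℝⁿ be a convex open set and let K₁,…,Kₙ : U → ℝ be smooth with Kᵢ(x) ≠ Kⱼ(x) for all i ≠ j and all x ∈ U. Then the following are equivalent: (a) there exist smooth functions g₁,…,gₙ : U → ℝ such that, setting H(x,p) = (1/2)·Σᵢ exp(gᵢ(x))·pᵢ² and F(x,p) = Σᵢ exp(gᵢ(x))·Kᵢ(x)·pᵢ², one has {H,F}(x,p) = 0 for all (x,p) ∈ U × ℝⁿ; (b) for every i, (∂Kᵢ/∂xⁱ)(x) = 0 on U, and K₁,…,Kₙ satisfy the semi-Hamiltonian (Tsarev) conditions on U. -/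
open scoped BigOperators

open Set Filter Topology MeasureTheory intervalIntegral
open scoped ContDiff Manifold

theorem param_hasFDerivAt {n : ℕ} {F : Type} [NormedAddCommGroup F] [NormedSpace ℝ F]
    [CompleteSpace F]
    {U : Set (Fin n → ℝ)} {W : Set ((Fin n → ℝ) × ℝ)} (hW : IsOpen W)
    (hUW : ∀ x ∈ U, ∀ t ∈ Icc (0:ℝ) 1, (x, t) ∈ W)
    {f : (Fin n → ℝ) × ℝ → F} (hf : ContDiffOn ℝ ∞ f W) {x : Fin n → ℝ} (hx : x ∈ U) :
    HasFDerivAt (fun y => ∫ t in (0:ℝ)..1, f (y, t))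
      (∫ t in (0:ℝ)..1, (fderiv ℝ f (x, t)).comp (ContinuousLinearMap.inl ℝ (Fin n → ℝ) ℝ)) x := by
  have hf' : ContDiffOn ℝ ∞ (fun q => (fderiv ℝ f q).comp
      (ContinuousLinearMap.inl ℝ (Fin n → ℝ) ℝ)) W :=
    (hf.fderiv_of_isOpen hW (by simp)).clm_comp contDiffOn_const
  obtain ⟨u, v, hu, hv, hxu, hIv, huv⟩ := generalized_tube_lemma (isCompact_singleton (x := x))
    (isCompact_Icc (a := (0:ℝ)) (b := 1)) hW (by
      rintro ⟨y, t⟩ ⟨hy, ht⟩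
      rw [mem_singleton_iff] at hy
      simp only at hy ht
      subst hy
      exact hUW _ hx t ht)
  have hxu' : u ∈ 𝓝 x := hu.mem_nhds (hxu rfl)
  obtain ⟨L, hL, hLc, hLu⟩ := exists_mem_nhds_isCompact_mapsTo (f := id) continuous_id hxu'
  have hsub : L ×ˢ Icc (0:ℝ) 1 ⊆ W := (Set.prod_mono (fun y hy => hLu hy) hIv).trans huv
  obtain ⟨C, hC⟩ := (hLc.prod (isCompact_Icc (a := (0:ℝ)) (b := 1))).exists_bound_of_continuousOn
    (hf'.continuousOn.mono hsub)
  have hcont : ∀ {G : Type} [NormedAddCommGroup G] (h : (Fin n → ℝ) × ℝ → G), ContinuousOn h W →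
      ∀ y ∈ L, ContinuousOn (fun t => h (y, t)) (uIcc (0:ℝ) 1) := by
    intro G _ h hh y hy
    refine hh.comp (by fun_prop) ?_
    intro t ht
    rw [uIcc_of_le zero_le_one] at ht
    exact hsub ⟨hy, ht⟩
  have hxL : x ∈ L := mem_of_mem_nhds hL
  refine intervalIntegral.hasFDerivAt_integral_of_dominated_of_fderiv_le (𝕜 := ℝ)
    (F := fun y t => f (y, t)) (bound := fun _ => C)
    (F' := fun y t => (fderiv ℝ f (y, t)).comp (ContinuousLinearMap.inl ℝ (Fin n → ℝ) ℝ))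
    hL ?_ ?_ ?_ ?_ ?_ ?_
  · filter_upwards [hL] with y hy
    exact (hcont f hf.continuousOn y hy).intervalIntegrable (μ := volume) |>.def'.aestronglyMeasurable
  · exact (hcont f hf.continuousOn x hxL).intervalIntegrable
  · exact (hcont _ hf'.continuousOn x hxL).intervalIntegrable (μ := volume) |>.def'.aestronglyMeasurable
  · refine Eventually.of_forall fun t ht y hy => ?_
    rw [uIoc_of_le zero_le_one] at ht
    exact hC (y, t) ⟨hy, Ioc_subset_Icc_self ht⟩
  · exact intervalIntegrable_const
  · refine Eventually.of_forall fun t ht y hy => ?_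
    rw [uIoc_of_le zero_le_one] at ht
    have hm : (y, t) ∈ W := hsub ⟨hy, Ioc_subset_Icc_self ht⟩
    have h1 : HasFDerivAt f (fderiv ℝ f (y, t)) (y, t) :=
      ((hf.contDiffAt (hW.mem_nhds hm)).differentiableAt (by simp)).hasFDerivAt
    exact h1.comp y (hasFDerivAt_prodMk_left y t)

theorem param_contDiffOn_nat {n : ℕ} {U : Set (Fin n → ℝ)} (hU : IsOpen U)
    {W : Set ((Fin n → ℝ) × ℝ)} (hW : IsOpen W)
    (hUW : ∀ x ∈ U, ∀ t ∈ Icc (0:ℝ) 1, (x, t) ∈ W) (m : ℕ) :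
    ∀ {F : Type} [NormedAddCommGroup F] [NormedSpace ℝ F] [CompleteSpace F]
    {f : (Fin n → ℝ) × ℝ → F}, ContDiffOn ℝ ∞ f W →
    ContDiffOn ℝ m (fun y => ∫ t in (0:ℝ)..1, f (y, t)) U := by
  induction m with
  | zero =>
    intro F _ _ _ f hf
    refine contDiffOn_zero.2 fun x hx => ?_
    exact (param_hasFDerivAt hW hUW hf hx).continuousAt.continuousWithinAt
  | succ m ih =>
    intro F _ _ _ f hf
    have hf' : ContDiffOn ℝ ∞ (fun q => (fderiv ℝ f q).comp
        (ContinuousLinearMap.inl ℝ (Fin n → ℝ) ℝ)) W :=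
      (hf.fderiv_of_isOpen hW (by simp)).clm_comp contDiffOn_const
    push_cast
    rw [contDiffOn_succ_iff_fderiv_of_isOpen hU]
    refine ⟨fun x hx =>
      (param_hasFDerivAt hW hUW hf hx).differentiableAt.differentiableWithinAt, by simp, ?_⟩
    refine (ih hf').congr fun x hx => ?_
    exact (param_hasFDerivAt hW hUW hf hx).fderiv

theorem param_contDiffOn {n : ℕ} {U : Set (Fin n → ℝ)} (hU : IsOpen U)
    {W : Set ((Fin n → ℝ) × ℝ)} (hW : IsOpen W)
    (hUW : ∀ x ∈ U, ∀ t ∈ Icc (0:ℝ) 1, (x, t) ∈ W)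
    {f : (Fin n → ℝ) × ℝ → ℝ} (hf : ContDiffOn ℝ ∞ f W) :
    ContDiffOn ℝ ∞ (fun y => ∫ t in (0:ℝ)..1, f (y, t)) U :=
  contDiffOn_infty.2 fun m => param_contDiffOn_nat hU hW hUW m hf

/-- a smooth choice of base points in the slices of a convex open set -/
theorem exists_smooth_section {n : ℕ} {U : Set (Fin n → ℝ)} (hU : IsOpen U) (hconv : Convex ℝ U)
    (i : Fin n) : ∃ c : (Fin n → ℝ) → (Fin n → ℝ), ContDiffOn ℝ ∞ c U ∧
      (∀ x ∈ U, c x ∈ U ∧ c x i = x i) ∧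
      (∀ x ∈ U, ∀ j, j ≠ i → fderiv ℝ c x (Pi.single j 1) = 0) := by
  let M : TopologicalSpace.Opens ℝ := ⟨Set.image (fun x : Fin n → ℝ => x i) U, isOpenMap_eval i U hU⟩
  have : LocallyCompactSpace M := M.isOpen.locallyCompactSpace
  have key : ∃ g : C^∞⟮𝓘(ℝ, ℝ), M; 𝓘(ℝ, Fin n → ℝ), (Fin n → ℝ)⟯,
      ∀ s : M, g s ∈ {y : Fin n → ℝ | y ∈ U ∧ y i = s} := by
    apply exists_contMDiffMap_forall_mem_convex_of_local 𝓘(ℝ, ℝ)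
    · intro s y hy z hz a b ha hb hab
      refine ⟨hconv hy.1 hz.1 ha hb hab, ?_⟩
      simp only [Pi.add_apply, Pi.smul_apply, smul_eq_mul, hy.2, hz.2]
      rw [← add_mul, hab, one_mul]
    · rintro ⟨s, x, hx, rfl⟩
      have hl : ContDiff ℝ ∞ (fun r : ℝ => x + (r - x i) • (Pi.single i 1 : Fin n → ℝ)) := by
        fun_prop
      refine ⟨{r : M | x + ((r:ℝ) - x i) • (Pi.single i 1 : Fin n → ℝ) ∈ U}, ?_,
        fun r => x + ((r:ℝ) - x i) • (Pi.single i 1 : Fin n → ℝ), ?_, ?_⟩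
      · refine IsOpen.mem_nhds (hU.preimage (hl.continuous.comp continuous_subtype_val)) ?_
        simpa using hx
      · exact (hl.contMDiff.comp contMDiff_subtype_val).contMDiffOn
      · intro r hr
        exact ⟨hr, by simp⟩
  obtain ⟨g, hg⟩ := key
  classical
  let σ : ℝ → (Fin n → ℝ) := fun s => if h : s ∈ M then g ⟨s, h⟩ else 0
  have hσ : ∀ s ∈ M, ContDiffAt ℝ ∞ σ s := by
    intro s hs
    rw [← contMDiffAt_iff_contDiffAt]
    have := (contMDiffAt_subtype_iff (I := 𝓘(ℝ, ℝ)) (I' := 𝓘(ℝ, Fin n → ℝ)) (n := ∞)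
      (U := M) (f := σ) (x := ⟨s, hs⟩)).1
    apply this
    have e : (fun x : M => σ x) = g := by
      funext x
      simp [σ]
    rw [e]
    exact g.contMDiff.contMDiffAt
  have hM : ∀ x ∈ U, x i ∈ M := fun x hx => ⟨x, hx, rfl⟩
  refine ⟨fun x => σ (x i), ?_, ?_, ?_⟩
  · intro x hx
    exact ((hσ _ (hM x hx)).comp x (contDiff_apply ℝ ℝ i).contDiffAt).contDiffWithinAt
  · intro x hx
    have := hg ⟨x i, hM x hx⟩
    simp only [σ, dif_pos (hM x hx)]
    exact this
  · intro x hx j hj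
    have h1 : HasFDerivAt σ (fderiv ℝ σ (x i)) (x i) :=
      ((hσ _ (hM x hx)).differentiableAt (by simp)).hasFDerivAt
    have h2 := h1.comp x (hasFDerivAt_apply (𝕜 := ℝ) i x)
    have h3 : fderiv ℝ (fun x : Fin n → ℝ => σ (x i)) x = _ := h2.fderiv
    rw [h3]
    simp [hj.symm]

/-- the potential in the slices -/
theorem exists_potential {n : ℕ} {U : Set (Fin n → ℝ)} (hU : IsOpen U) (hconv : Convex ℝ U)
    (i : Fin n) (Γ : Fin n → (Fin n → ℝ) → ℝ) (hΓ : ∀ k, ContDiffOn ℝ ∞ (Γ k) U)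
    (hsymm : ∀ j k, j ≠ i → k ≠ i → ∀ x ∈ U, pd (Γ j) k x = pd (Γ k) j x) :
    ∃ g : (Fin n → ℝ) → ℝ, ContDiffOn ℝ ∞ g U ∧ ∀ j, j ≠ i → ∀ x ∈ U, pd g j x = Γ j x := by
  obtain ⟨c, hc, hcU, hcd⟩ := exists_smooth_section hU hconv i
  let γ : (Fin n → ℝ) × ℝ → (Fin n → ℝ) := fun q => c q.1 + q.2 • (q.1 - c q.1)
  let W : Set ((Fin n → ℝ) × ℝ) := (U ×ˢ univ) ∩ Set.preimage γ U
  have hc1 : ContDiffOn ℝ ∞ (fun q : (Fin n → ℝ) × ℝ => c q.1) (U ×ˢ univ) :=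
    hc.comp contDiff_fst.contDiffOn (fun q hq => hq.1)
  have hγ : ContDiffOn ℝ ∞ γ (U ×ˢ univ) :=
    hc1.add (contDiff_snd.contDiffOn.smul (contDiff_fst.contDiffOn.sub hc1))
  have hW : IsOpen W := hγ.continuousOn.isOpen_inter_preimage (hU.prod isOpen_univ) hU
  have hUW : ∀ x ∈ U, ∀ t ∈ Icc (0:ℝ) 1, (x, t) ∈ W := by
    intro x hx t ht
    exact ⟨⟨hx, trivial⟩, hconv.add_smul_sub_mem (hcU x hx).1 hx ht⟩
  let f : (Fin n → ℝ) × ℝ → ℝ := fun q => ∑ k, Γ k (γ q) * (q.1 k - c q.1 k)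
  have hf : ContDiffOn ℝ ∞ f W := by
    refine ContDiffOn.sum fun k _ => ContDiffOn.mul ?_ (ContDiffOn.sub ?_ ?_)
    · exact (hΓ k).comp (hγ.mono inter_subset_left) (fun q hq => hq.2)
    · fun_prop
    · exact (contDiffOn_pi.1 hc1 k).mono inter_subset_left
  refine ⟨fun y => ∫ t in (0:ℝ)..1, f (y, t), param_contDiffOn hU hW hUW hf, ?_⟩
  intro j hj x hx
  have hcx : HasFDerivAt c (fderiv ℝ c x) x :=
    ((hc.contDiffAt (hU.mem_nhds hx)).differentiableAt (by simp)).hasFDerivAt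
  have hΓd : ∀ k, ∀ y ∈ U, HasFDerivAt (Γ k) (fderiv ℝ (Γ k) y) y := fun k y hy =>
    (((hΓ k).contDiffAt (hU.mem_nhds hy)).differentiableAt (by simp)).hasFDerivAt
  have hf'c : ContDiffOn ℝ ∞ (fun q => (fderiv ℝ f q).comp
      (ContinuousLinearMap.inl ℝ (Fin n → ℝ) ℝ)) W :=
    (hf.fderiv_of_isOpen hW (by simp)).clm_comp contDiffOn_const
  have hf'x : ContinuousOn (fun t => (fderiv ℝ f (x, t)).comp
      (ContinuousLinearMap.inl ℝ (Fin n → ℝ) ℝ)) (uIcc (0:ℝ) 1) := by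
    refine hf'c.continuousOn.comp (f := fun t => (x, t)) (by fun_prop) ?_
    intro t ht
    rw [uIcc_of_le zero_le_one] at ht
    exact hUW x hx t ht
  have e1 : pd (fun y => ∫ t in (0:ℝ)..1, f (y, t)) j x =
      ∫ t in (0:ℝ)..1, ((fderiv ℝ f (x, t)).comp
      (ContinuousLinearMap.inl ℝ (Fin n → ℝ) ℝ)) (Pi.single j 1) := by
    rw [pd, (param_hasFDerivAt hW hUW hf hx).fderiv]
    exact ContinuousLinearMap.intervalIntegral_apply hf'x.intervalIntegrable _
  -- the integrand is a total derivative
  have e2 : ∀ t ∈ uIcc (0:ℝ) 1, HasDerivAt (fun t : ℝ => t * Γ j (γ (x, t)))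
      (((fderiv ℝ f (x, t)).comp
      (ContinuousLinearMap.inl ℝ (Fin n → ℝ) ℝ)) (Pi.single j 1)) t := by
    intro t ht
    rw [uIcc_of_le zero_le_one] at ht
    have hm := hUW x hx t ht
    have hγU : γ (x, t) ∈ U := hm.2
    have h1 : HasFDerivAt (fun y => f (y, t)) ((fderiv ℝ f (x, t)).comp
      (ContinuousLinearMap.inl ℝ (Fin n → ℝ) ℝ)) x :=
      HasFDerivAt.comp (g := f) x
        ((hf.contDiffAt (hW.mem_nhds hm)).differentiableAt (by simp)).hasFDerivAt
        (hasFDerivAt_prodMk_left x t)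
    have hγx : HasFDerivAt (fun y => γ (y, t)) (fderiv ℝ c x +
        t • (ContinuousLinearMap.id ℝ (Fin n → ℝ) - fderiv ℝ c x)) x :=
      hcx.add (((hasFDerivAt_id x).sub hcx).const_smul t)
    have h2 : HasFDerivAt (fun y => f (y, t)) (∑ k, (Γ k (γ (x, t)) •
        (ContinuousLinearMap.proj k - (ContinuousLinearMap.proj k).comp (fderiv ℝ c x)) +
        (x k - c x k) • ((fderiv ℝ (Γ k) (γ (x, t))).comp (fderiv ℝ c x +
        t • (ContinuousLinearMap.id ℝ (Fin n → ℝ) - fderiv ℝ c x))))) x := by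
      refine HasFDerivAt.fun_sum fun k _ => ?_
      refine HasFDerivAt.mul ((hΓd k _ hγU).comp x hγx) ?_
      exact (hasFDerivAt_apply (𝕜 := ℝ) k x).sub ((hasFDerivAt_apply (𝕜 := ℝ) k (c x)).comp x hcx)
    rw [h1.unique h2]
    have h3 : HasDerivAt (fun t : ℝ => γ (x, t)) (x - c x) t := by
      have := ((hasDerivAt_id t).smul_const (x - c x)).const_add (c x)
      exact this.congr_deriv (one_smul _ _)
    have h4 := (hasDerivAt_id t).mul ((hΓd j _ hγU).comp_hasDerivAt t h3)
    refine h4.congr_deriv ?_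
    have h5 : fderiv ℝ (Γ j) (γ (x, t)) (x - c x) =
        ∑ k, (x k - c x k) * pd (Γ k) j (γ (x, t)) := by
      conv_lhs => rw [pi_eq_sum_univ' (x - c x), map_sum]
      refine Finset.sum_congr rfl fun k _ => ?_
      rw [map_smul, smul_eq_mul]
      by_cases hk : k = i
      · subst hk
        simp [(hcU x hx).2]
      · rw [← hsymm j k hj hk _ hγU]
        simp [pd]
    simp only [id, one_mul, h5]
    simp [hcd x hx j hj, Finset.sum_add_distrib, Finset.mul_sum, pd, Pi.single_apply]
    exact Finset.sum_congr rfl fun k _ => by ring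
  rw [e1, integral_eq_sub_of_hasDerivAt e2 ?_]
  · simp [γ]
  · exact (hf'x.clm_apply continuousOn_const).intervalIntegrable

theorem poly_zero {n : ℕ} (A : Fin n → Fin n → ℝ)
    (h : ∀ p : Fin n → ℝ, ∑ s, ∑ i, A s i * (p s * p i ^ 2) = 0) (s i : Fin n) : A s i = 0 := by
  by_cases hsi : s = i
  · subst hsi
    have := h (Pi.single s 1)
    simpa [Pi.single_apply, ite_pow] using this
  · have key : ∀ a b : ℝ, a ^ 3 * A s s + b ^ 3 * A i i + a * b ^ 2 * A s i + b * a ^ 2 * A i s = 0 := by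
      intro a b
      have h0 := h (fun k => (if k = s then a else 0) + (if k = i then b else 0))
      have hsq : ∀ k, ((if k = s then a else 0) + (if k = i then b else 0)) ^ 2 =
          (if k = s then a ^ 2 else 0) + (if k = i then b ^ 2 else 0) := by
        intro k
        by_cases h1 : k = s
        · subst h1; simp [hsi]
        · simp [h1]
      simp only [hsq] at h0
      simp [mul_add, add_mul, Finset.sum_add_distrib] at h0
      linarith
    have h1 := key 1 1
    have h2 := key 1 (-1)
    have h3 := key 1 0
    have h4 := key 0 1
    norm_num at h1 h2 h3 h4
    linarith

theorem poisson_formula {n : ℕ} (g K : Fin n → (Fin n → ℝ) → ℝ) (x p : Fin n → ℝ)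
    (hg : ∀ i, DifferentiableAt ℝ (g i) x) (hK : ∀ i, DifferentiableAt ℝ (K i) x) :
    poisson
          (fun q => (1 / 2 : ℝ) * ∑ i, Real.exp (g i q.1) * (q.2 i) ^ 2)
          (fun q => ∑ i, Real.exp (g i q.1) * K i q.1 * (q.2 i) ^ 2) (x, p) =
    ∑ s, ∑ i, (Real.exp (g s x) * Real.exp (g i x) *
      (pd (K i) s x - (K s x - K i x) * pd (g i) s x)) * (p s * p i ^ 2) := by
  have hg' : ∀ i, HasFDerivAt (fun q : (Fin n → ℝ) × (Fin n → ℝ) => Real.exp (g i q.1))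
      (Real.exp (g i x) • ((fderiv ℝ (g i) x).comp (ContinuousLinearMap.fst ℝ _ _))) (x, p) := by
    intro i
    exact HasFDerivAt.exp ((hg i).hasFDerivAt.comp (x, p) hasFDerivAt_fst)
  have hK' : ∀ i, HasFDerivAt (fun q : (Fin n → ℝ) × (Fin n → ℝ) => K i q.1)
      ((fderiv ℝ (K i) x).comp (ContinuousLinearMap.fst ℝ _ _)) (x, p) := by
    intro i
    exact (hK i).hasFDerivAt.comp (x, p) hasFDerivAt_fst
  have hp : ∀ i, HasFDerivAt (fun q : (Fin n → ℝ) × (Fin n → ℝ) => q.2 i ^ 2)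
      ((2 * p i) • ((ContinuousLinearMap.proj i).comp (ContinuousLinearMap.snd ℝ _ _))) (x, p) := by
    intro i
    have h1 : HasFDerivAt (fun q : (Fin n → ℝ) × (Fin n → ℝ) => q.2 i)
        ((ContinuousLinearMap.proj i).comp (ContinuousLinearMap.snd ℝ _ _)) (x, p) :=
      ((ContinuousLinearMap.proj (R := ℝ) (φ := fun _ : Fin n => ℝ) i).comp
        (ContinuousLinearMap.snd ℝ (Fin n → ℝ) (Fin n → ℝ))).hasFDerivAt
    have := h1.pow 2
    simpa using this
  have hH := (HasFDerivAt.fun_sum (u := Finset.univ) fun i _ => (hg' i).mul (hp i)).const_mul (1 / 2 : ℝ)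
  have hF := HasFDerivAt.fun_sum (u := Finset.univ) fun i _ => ((hg' i).mul (hK' i)).mul (hp i)
  have hH1 : fderiv ℝ (fun q : (Fin n → ℝ) × (Fin n → ℝ) =>
    (1 / 2 : ℝ) * ∑ i, Real.exp (g i q.1) * (q.2 i) ^ 2) (x, p) = _ := hH.fderiv
  have hF1 : fderiv ℝ (fun q : (Fin n → ℝ) × (Fin n → ℝ) =>
    ∑ i, Real.exp (g i q.1) * K i q.1 * (q.2 i) ^ 2) (x, p) = _ := hF.fderiv
  unfold poisson
  refine Finset.sum_congr rfl fun s _ => ?_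
  rw [hH1, hF1]
  simp [Pi.single_apply, ← pd.eq_1, Finset.mul_sum, Finset.sum_mul]
  rw [← Finset.sum_sub_distrib]
  refine Finset.sum_congr rfl fun i _ => ?_
  ring

theorem poisson_iff {n : ℕ} (g K : Fin n → (Fin n → ℝ) → ℝ) (x : Fin n → ℝ)
    (hg : ∀ i, DifferentiableAt ℝ (g i) x) (hK : ∀ i, DifferentiableAt ℝ (K i) x) :
    (∀ p, poisson
          (fun q => (1 / 2 : ℝ) * ∑ i, Real.exp (g i q.1) * (q.2 i) ^ 2)
          (fun q => ∑ i, Real.exp (g i q.1) * K i q.1 * (q.2 i) ^ 2) (x, p) = 0) ↔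
    ∀ s i, pd (K i) s x = (K s x - K i x) * pd (g i) s x := by
  simp only [poisson_formula g K x _ hg hK]
  constructor
  · intro h s i
    have := poly_zero _ h s i
    simp only [mul_eq_zero, Real.exp_ne_zero, false_or] at this
    linarith
  · intro h p
    simp [h]

theorem pd_contDiffOn {n : ℕ} {U : Set (Fin n → ℝ)} (hU : IsOpen U) {f : (Fin n → ℝ) → ℝ}
    (hf : ContDiffOn ℝ ∞ f U) (j : Fin n) : ContDiffOn ℝ ∞ (pd f j) U :=
  (hf.fderiv_of_isOpen hU (by simp)).clm_apply contDiffOn_const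

theorem pd_comm {n : ℕ} {U : Set (Fin n → ℝ)} (hU : IsOpen U) {f : (Fin n → ℝ) → ℝ}
    (hf : ContDiffOn ℝ ∞ f U) (j k : Fin n) {x : Fin n → ℝ} (hx : x ∈ U) :
    pd (pd f j) k x = pd (pd f k) j x := by
  have h1 : ContDiffAt ℝ ∞ f x := hf.contDiffAt (hU.mem_nhds hx)
  have h2 : IsSymmSndFDerivAt ℝ f x := h1.isSymmSndFDerivAt (by simpa using WithTop.coe_le_coe.2 (le_top : (2 : ℕ∞) ≤ ⊤))
  have h3 : DifferentiableAt ℝ (fderiv ℝ f) x :=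
    ((hf.fderiv_of_isOpen hU (m := ∞) (by simp)).contDiffAt (hU.mem_nhds hx)).differentiableAt
      (by simp)
  have h4 : ∀ a b : Fin n, pd (pd f a) b x =
      fderiv ℝ (fderiv ℝ f) x (Pi.single b 1) (Pi.single a 1) := by
    intro a b
    have := (h3.hasFDerivAt.clm_apply (hasFDerivAt_const (Pi.single a 1 : Fin n → ℝ) x)).fderiv
    have e : fderiv ℝ (pd f a) x = _ := this
    rw [pd, e]
    simp
  rw [h4, h4]
  exact h2 _ _

theorem pd_congr {n : ℕ} {U : Set (Fin n → ℝ)} (hU : IsOpen U) {f g : (Fin n → ℝ) → ℝ}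
    (h : ∀ x ∈ U, f x = g x) (j : Fin n) {x : Fin n → ℝ} (hx : x ∈ U) : pd f j x = pd g j x := by
  have : f =ᶠ[𝓝 x] g := by
    filter_upwards [hU.mem_nhds hx] with y hy using h y hy
  rw [pd, pd, this.fderiv_eq]

theorem exists_metric_iff_weaklyNonlinear_and_semiHamiltonian
    {n : ℕ} (U : Set (Fin n → ℝ)) (hU : IsOpen U) (hconv : Convex ℝ U)
    (K : Fin n → (Fin n → ℝ) → ℝ)
    (hK : ∀ i, ContDiffOn ℝ (⊤ : ℕ∞) (K i) U)
    (hdist : ∀ i j : Fin n, i ≠ j → ∀ x ∈ U, K i x ≠ K j x) :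
    (∃ g : Fin n → (Fin n → ℝ) → ℝ, (∀ i, ContDiffOn ℝ (⊤ : ℕ∞) (g i) U) ∧
      ∀ x ∈ U, ∀ p : Fin n → ℝ,
        poisson
          (fun q => (1 / 2 : ℝ) * ∑ i, Real.exp (g i q.1) * (q.2 i) ^ 2)
          (fun q => ∑ i, Real.exp (g i q.1) * K i q.1 * (q.2 i) ^ 2) (x, p) = 0)
    ↔ ((∀ i : Fin n, ∀ x ∈ U, pd (K i) i x = 0) ∧ SemiHamiltonian K U) := by
  have hd : ∀ {f : (Fin n → ℝ) → ℝ}, ContDiffOn ℝ ∞ f U → ∀ x ∈ U, DifferentiableAt ℝ f x :=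
    fun hf x hx => (hf.contDiffAt (hU.mem_nhds hx)).differentiableAt (by simp)
  constructor
  · rintro ⟨g, hg, hP⟩
    have hP' : ∀ x ∈ U, ∀ s i, pd (K i) s x = (K s x - K i x) * pd (g i) s x := fun x hx =>
      (poisson_iff g K x (fun i => hd (hg i) x hx) (fun i => hd (hK i) x hx)).1 (hP x hx)
    refine ⟨fun i x hx => by simp [hP' x hx i i], ?_⟩
    intro i j k hij hjk hik x hx
    have hs : ∀ s, i ≠ s → ∀ y ∈ U, (K s y - K i y)⁻¹ * pd (K i) s y = pd (g i) s y := by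
      intro s his y hy
      rw [hP' y hy s i, inv_mul_cancel_left₀ (sub_ne_zero.2 (hdist i s his y hy).symm)]
    rw [pd_congr hU (hs j hij) k hx, pd_congr hU (hs k hik) j hx]
    exact pd_comm hU (hg i) j k hx
  · rintro ⟨h0, hSH⟩
    have hex : ∀ i, ∃ g : (Fin n → ℝ) → ℝ, ContDiffOn ℝ ∞ g U ∧ ∀ j, j ≠ i → ∀ x ∈ U,
        pd g j x = (K j x - K i x)⁻¹ * pd (K i) j x := by
      intro i
      refine exists_potential hU hconv i (fun j x => (K j x - K i x)⁻¹ * pd (K i) j x) ?_ ?_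
      · intro k
        by_cases hk : k = i
        · subst hk
          simpa using contDiffOn_const
        · exact (((hK k).sub (hK i)).inv fun x hx => sub_ne_zero.2 (hdist k i hk x hx)).mul
            (pd_contDiffOn hU (hK i) k)
      · intro j k hj hk x hx
        by_cases hjk : j = k
        · rw [hjk]
        · exact hSH i j k hj.symm hjk hk.symm x hx
    choose g hg hgd using hex
    refine ⟨g, hg, fun x hx => ?_⟩
    refine (poisson_iff g K x (fun i => hd (hg i) x hx) (fun i => hd (hK i) x hx)).2 ?_
    intro s i
    by_cases hs : s = i
    · subst hs
      simp [h0 s x hx]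
    · rw [hgd i s hs x hx, mul_inv_cancel_left₀ (sub_ne_zero.2 (hdist s i hs x hx))]
end

section
/- Let U ⊆ ℝⁿ be open and let A₁,…,Aₙ : U → ℝ be smooth with Aᵢ(x) ≠ Aⱼ(x) for all i ≠ j and all x ∈ U, and set A(x) = diag(A₁(x),…,Aₙ(x)). Let N be the Nijenhuis torsion of A, let 𝒦 = 3[N, A²] (Nijenhuis bracket of the (1,2)-tensor field N with the (1,1)-tensor field A²), and define the (1,3)-tensor fields M, Q, P pointwise by M(X,Y,Z) = N(X, A N(Y,Z)) + N(AX, N(Y,Z)) − N(N(X,Z), AY) + N(N(X,Y), AZ) − N(X, N(AY,Z)) − N(X, N(Y,AZ)); Q(X,Y,Z) = 𝒦(AX,AY,Z) − 𝒦(A²X,Y,Z) − 𝒦(X,AY,AZ) + 𝒦(AX,Y,AZ) + 4M(AX,Y,Z) − 2M(X,AY,Z) − 2M(X,Y,AZ); P(X,Y,Z) = A Q(X,AY,Z) + A Q(X,Y,AZ) − A² Q(X,Y,Z) − Q(X,AY,AZ), for X,Y,Z ∈ ℝⁿ. Then P vanishes identically on U if and only if A₁,…,Aₙ satisfy the semi-Hamiltonian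 (Tsarev) conditions: for all pairwise distinct indices i, j, k and all x ∈ U, ∂/∂xᵏ( (Aⱼ − Aᵢ)⁻¹ · ∂Aᵢ/∂xʲ )(x) = ∂/∂xʲ( (Aₖ − Aᵢ)⁻¹ · ∂Aᵢ/∂xᵏ )(x). -/
open scoped BigOperators
open Matrix

/-- Components `N^i_{jk}` of the Nijenhuis torsion of a matrix-valued map `A`. -/
noncomputable def nijTorsion {n : ℕ} (A : (Fin n → ℝ) → Matrix (Fin n) (Fin n) ℝ)
    (x : Fin n → ℝ) (i j k : Fin n) : ℝ :=
  ∑ s : Fin n,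
    (A x s j * pd (fun y => A y i k) s x - A x s k * pd (fun y => A y i j) s x
      - A x i s * pd (fun y => A y s k) j x + A x i s * pd (fun y => A y s j) k x)

/-- Skew-symmetrization (with division) of a `3`-index array over its three indices. -/
noncomputable def skew3 {n : ℕ} (T : Fin n → Fin n → Fin n → ℝ) (j1 j2 j3 : Fin n) : ℝ :=
  (1 / 6 : ℝ) * ∑ π : Equiv.Perm (Fin 3),
    ((Equiv.Perm.sign π : ℤ) : ℝ) *
      T (![j1, j2, j3] (π 0)) (![j1, j2, j3] (π 1)) (![j1, j2, j3] (π 2))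

/-- Components of the Nijenhuis bracket `[Q, R]` of a `(1,2)`-tensor field `Q` (skew-symmetric
in its lower indices) with a `(1,1)`-tensor field `R`. -/
noncomputable def nijBracket {n : ℕ} (Q : (Fin n → ℝ) → Fin n → Fin n → Fin n → ℝ)
    (R : (Fin n → ℝ) → Matrix (Fin n) (Fin n) ℝ) (x : Fin n → ℝ)
    (i j1 j2 j3 : Fin n) : ℝ :=
  skew3 (fun a b c => ∑ s : Fin n,
    (Q x s a b * pd (fun y => R y i c) s x
      - R x s c * pd (fun y => Q y i a b) s x
      - 2 * Q x i s b * pd (fun y => R y s c) a x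
      + R x i s * pd (fun y => Q y s a b) c x)) j1 j2 j3

/-- The Nijenhuis torsion as a bilinear map on vectors: `N(X,Y)^i = Σ N^i_{jk} X^j Y^k`. -/
noncomputable def Nmap {n : ℕ} (A : (Fin n → ℝ) → Matrix (Fin n) (Fin n) ℝ)
    (x : Fin n → ℝ) (X Y : Fin n → ℝ) : Fin n → ℝ :=
  fun i => ∑ j : Fin n, ∑ k : Fin n, nijTorsion A x i j k * X j * Y k

/-- The `(1,3)`-tensor `𝒦 = 3[N, A²]` as a trilinear map on vectors. -/
noncomputable def Kmap {n : ℕ} (A : (Fin n → ℝ) → Matrix (Fin n) (Fin n) ℝ)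
    (x : Fin n → ℝ) (X Y Z : Fin n → ℝ) : Fin n → ℝ :=
  fun i => ∑ a : Fin n, ∑ b : Fin n, ∑ c : Fin n,
    3 * nijBracket (nijTorsion A) (fun y => A y * A y) x i a b c * X a * Y b * Z c

/-- The `(1,3)`-tensor `M`. -/
noncomputable def Mmap {n : ℕ} (A : (Fin n → ℝ) → Matrix (Fin n) (Fin n) ℝ)
    (x : Fin n → ℝ) (X Y Z : Fin n → ℝ) : Fin n → ℝ :=
  fun i =>
    Nmap A x X (A x *ᵥ Nmap A x Y Z) i + Nmap A x (A x *ᵥ X) (Nmap A x Y Z) i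
      - Nmap A x (Nmap A x X Z) (A x *ᵥ Y) i + Nmap A x (Nmap A x X Y) (A x *ᵥ Z) i
      - Nmap A x X (Nmap A x (A x *ᵥ Y) Z) i - Nmap A x X (Nmap A x Y (A x *ᵥ Z)) i

/-- The `(1,3)`-tensor `Q`. -/
noncomputable def Qmap {n : ℕ} (A : (Fin n → ℝ) → Matrix (Fin n) (Fin n) ℝ)
    (x : Fin n → ℝ) (X Y Z : Fin n → ℝ) : Fin n → ℝ :=
  fun i =>
    Kmap A x (A x *ᵥ X) (A x *ᵥ Y) Z i - Kmap A x ((A x * A x) *ᵥ X) Y Z i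
      - Kmap A x X (A x *ᵥ Y) (A x *ᵥ Z) i + Kmap A x (A x *ᵥ X) Y (A x *ᵥ Z) i
      + 4 * Mmap A x (A x *ᵥ X) Y Z i - 2 * Mmap A x X (A x *ᵥ Y) Z i
      - 2 * Mmap A x X Y (A x *ᵥ Z) i

/-- The `(1,3)`-tensor `P`. -/
noncomputable def Pmap {n : ℕ} (A : (Fin n → ℝ) → Matrix (Fin n) (Fin n) ℝ)
    (x : Fin n → ℝ) (X Y Z : Fin n → ℝ) : Fin n → ℝ :=
  fun i =>
    (A x *ᵥ Qmap A x X (A x *ᵥ Y) Z) i + (A x *ᵥ Qmap A x X Y (A x *ᵥ Z)) i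
      - ((A x * A x) *ᵥ Qmap A x X Y Z) i - Qmap A x X (A x *ᵥ Y) (A x *ᵥ Z) i

/-- Trilinear form with coefficients `C`. -/
noncomputable def tri {n : ℕ} (C : Fin n → Fin n → Fin n → ℝ) (X Y Z : Fin n → ℝ) : ℝ :=
  ∑ p, ∑ q, ∑ r, C p q r * X p * Y q * Z r

/-- Torsion components of a diagonal field, in terms of `G i j = (a j - a i) * d i j`. -/
noncomputable def NN {n : ℕ} (G : Fin n → Fin n → ℝ) (i j k : Fin n) : ℝ :=
  (if i = k then G i j else 0) - (if i = j then G i k else 0)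

lemma tri_single {n : ℕ} (C : Fin n → Fin n → Fin n → ℝ) (p q r : Fin n) :
    tri C (Pi.single p 1) (Pi.single q 1) (Pi.single r 1) = C p q r := by
  simp [tri, Pi.single_apply]

lemma tri_scale {n : ℕ} (C : Fin n → Fin n → Fin n → ℝ) (u v w X Y Z : Fin n → ℝ) :
    tri C (fun s => u s * X s) (fun s => v s * Y s) (fun s => w s * Z s)
      = tri (fun p q r => C p q r * u p * v q * w r) X Y Z := by
  unfold tri
  refine Finset.sum_congr rfl fun p _ => Finset.sum_congr rfl fun q _ =>
    Finset.sum_congr rfl fun r _ => ?_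
  ring

lemma tri_comp_right {n : ℕ} (B : Fin n → Fin n → ℝ) (C : Fin n → Fin n → Fin n → ℝ)
    (X Y Z : Fin n → ℝ) :
    (∑ p, ∑ s, B p s * X p * (∑ q, ∑ r, C s q r * Y q * Z r))
      = tri (fun p q r => ∑ s, B p s * C s q r) X Y Z := by
  unfold tri
  refine Finset.sum_congr rfl fun p _ => ?_
  simp only [Finset.mul_sum, Finset.sum_mul]
  rw [Finset.sum_comm]
  refine Finset.sum_congr rfl fun q _ => ?_
  rw [Finset.sum_comm]
  refine Finset.sum_congr rfl fun r _ => Finset.sum_congr rfl fun s _ => ?_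
  ring

lemma tri_comp_left {n : ℕ} (B : Fin n → Fin n → ℝ) (C : Fin n → Fin n → Fin n → ℝ)
    (X Y Z : Fin n → ℝ) :
    (∑ s, ∑ r, B s r * (∑ p, ∑ q, C s p q * X p * Y q) * Z r)
      = tri (fun p q r => ∑ s, B s r * C s p q) X Y Z := by
  unfold tri
  simp only [Finset.mul_sum, Finset.sum_mul]
  -- s r p q -> p q r s
  calc _ = ∑ s, ∑ p, ∑ q, ∑ r, B s r * (C s p q * X p * Y q) * Z r := by
        refine Finset.sum_congr rfl fun s _ => ?_
        rw [Finset.sum_comm]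
        refine Finset.sum_congr rfl fun p _ => ?_
        rw [Finset.sum_comm]
    _ = _ := by
        rw [Finset.sum_comm]
        refine Finset.sum_congr rfl fun p _ => ?_
        rw [Finset.sum_comm]
        refine Finset.sum_congr rfl fun q _ => ?_
        rw [Finset.sum_comm]
        refine Finset.sum_congr rfl fun r _ => Finset.sum_congr rfl fun s _ => ?_
        ring

lemma tri_swap {n : ℕ} (C : Fin n → Fin n → Fin n → ℝ) (X Y Z : Fin n → ℝ) :
    tri C X Z Y = tri (fun p q r => C p r q) X Y Z := by
  unfold tri
  refine Finset.sum_congr rfl fun p _ => ?_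
  rw [Finset.sum_comm]
  refine Finset.sum_congr rfl fun q _ => Finset.sum_congr rfl fun r _ => ?_
  ring

lemma tri_add {n : ℕ} (C D : Fin n → Fin n → Fin n → ℝ) (X Y Z : Fin n → ℝ) :
    tri C X Y Z + tri D X Y Z = tri (fun p q r => C p q r + D p q r) X Y Z := by
  simp only [tri, add_mul, Finset.sum_add_distrib]

lemma tri_sub {n : ℕ} (C D : Fin n → Fin n → Fin n → ℝ) (X Y Z : Fin n → ℝ) :
    tri C X Y Z - tri D X Y Z = tri (fun p q r => C p q r - D p q r) X Y Z := by
  simp only [tri, sub_mul, Finset.sum_sub_distrib]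

lemma tri_smul {n : ℕ} (c : ℝ) (C : Fin n → Fin n → Fin n → ℝ) (X Y Z : Fin n → ℝ) :
    c * tri C X Y Z = tri (fun p q r => c * C p q r) X Y Z := by
  simp only [tri, mul_assoc, Finset.mul_sum]

/-- Components of `M`. -/
noncomputable def MC {n : ℕ} (a : Fin n → ℝ) (G : Fin n → Fin n → ℝ) (i p q r : Fin n) : ℝ :=
  NN G i p r * G r q * (a p - a q) - NN G i p q * G q r * (a p - a r)
    - a q * (NN G i r q * G r p - NN G i p q * G p r)
    + a r * (NN G i q r * G q p - NN G i p r * G p q)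

/-- Pre-skew components of the bracket `[N, A²]`. -/
noncomputable def TC {n : ℕ} (a : Fin n → ℝ) (d G : Fin n → Fin n → ℝ)
    (H : Fin n → Fin n → Fin n → ℝ) (i b c e : Fin n) : ℝ :=
  (if i = e then 2 * a i * (G c b * d i c - G b c * d i b) else 0)
    + (a i ^ 2 - a e ^ 2) * NN (fun i j => H i j e) i b c
    - 4 * NN G i e c * a e * d e b

/-- Components of `𝒦`. -/
noncomputable def KC {n : ℕ} (a : Fin n → ℝ) (d G : Fin n → Fin n → ℝ)
    (H : Fin n → Fin n → Fin n → ℝ) (i p q r : Fin n) : ℝ :=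
  (1 / 2) * (TC a d G H i p q r - TC a d G H i q p r - TC a d G H i p r q
    - TC a d G H i r q p + TC a d G H i q r p + TC a d G H i r p q)

/-- Components of `Q`. -/
noncomputable def QC {n : ℕ} (a : Fin n → ℝ) (d G : Fin n → Fin n → ℝ)
    (H : Fin n → Fin n → Fin n → ℝ) (i p q r : Fin n) : ℝ :=
  -((a p - a q) * (a p - a r)) * KC a d G H i p q r
    + 2 * (2 * a p - a q - a r) * MC a G i p q r

lemma skew3_eq {n : ℕ} (T : Fin n → Fin n → Fin n → ℝ) (p q r : Fin n) :
    skew3 T p q r = (1 / 6) * (T p q r - T q p r - T p r q - T r q p + T q r p + T r p q) := by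
  have h : (Finset.univ : Finset (Equiv.Perm (Fin 3))) =
      {1, Equiv.swap 0 1, Equiv.swap 1 2, Equiv.swap 0 2,
        Equiv.swap 0 1 * Equiv.swap 1 2, Equiv.swap 1 2 * Equiv.swap 0 1} := by decide
  have e1 : (Equiv.swap 0 1 : Equiv.Perm (Fin 3)) 2 = 2 := by decide
  have e2 : (Equiv.swap 1 2 : Equiv.Perm (Fin 3)) 0 = 0 := by decide
  have e3 : (Equiv.swap 0 2 : Equiv.Perm (Fin 3)) 1 = 1 := by decide
  have s1 : Equiv.Perm.sign (Equiv.swap 0 1 : Equiv.Perm (Fin 3)) = -1 := by decide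
  have s2 : Equiv.Perm.sign (Equiv.swap 1 2 : Equiv.Perm (Fin 3)) = -1 := by decide
  have s3 : Equiv.Perm.sign (Equiv.swap 0 2 : Equiv.Perm (Fin 3)) = -1 := by decide
  unfold skew3
  rw [h, Finset.sum_insert (by decide), Finset.sum_insert (by decide),
    Finset.sum_insert (by decide), Finset.sum_insert (by decide),
    Finset.sum_insert (by decide), Finset.sum_singleton]
  simp [e1, e2, e3, s1, s2, s3, Equiv.swap_apply_left, Equiv.swap_apply_right]
  ring

section calc_at_point

lemma pd_ite {n : ℕ} (c : Prop) [Decidable c] (f : (Fin n → ℝ) → ℝ) (s : Fin n)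
    (x : Fin n → ℝ) :
    pd (fun y => if c then f y else 0) s x = if c then pd f s x else 0 := by
  by_cases h : c <;> simp [h, pd]

lemma torsion_diag {n : ℕ} (A : Fin n → (Fin n → ℝ) → ℝ) (x : Fin n → ℝ) (i j k : Fin n) :
    nijTorsion (fun y => Matrix.diagonal (fun r => A r y)) x i j k
      = NN (fun i j => (A j x - A i x) * pd (A i) j x) i j k := by
  unfold nijTorsion NN
  simp only [Matrix.diagonal_apply, pd_ite]
  simp only [Finset.sum_add_distrib, Finset.sum_sub_distrib, ite_mul, zero_mul,
    Finset.sum_ite_eq, Finset.sum_ite_eq', Finset.mem_univ, if_true]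
  split_ifs <;> ring

lemma sum_NN {n : ℕ} (G : Fin n → Fin n → ℝ) (f : Fin n → ℝ) (q r : Fin n) :
    ∑ s, f s * NN G s q r = f r * G r q - f q * G q r := by
  simp [NN, mul_sub, Finset.sum_sub_distrib]

lemma M_diag {n : ℕ} (A : Fin n → (Fin n → ℝ) → ℝ) (x : Fin n → ℝ) (X Y Z : Fin n → ℝ)
    (i : Fin n) :
    Mmap (fun y => Matrix.diagonal (fun r => A r y)) x X Y Z i
      = tri (MC (fun i => A i x) (fun i j => (A j x - A i x) * pd (A i) j x) i) X Y Z := by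
  unfold Mmap Nmap
  simp only [torsion_diag]
  generalize (fun i j => (A j x - A i x) * pd (A i) j x) = G
  have hm : ∀ W : Fin n → ℝ, (Matrix.diagonal fun r => A r x) *ᵥ W = fun s => A s x * W s := by
    intro W; ext s; simp [Matrix.mulVec_diagonal]
  simp only [hm]
  have h1 : (∑ p, ∑ s, NN G i p s * X p * (A s x * ∑ q, ∑ r, NN G s q r * Y q * Z r))
      = tri (fun p q r => ∑ s, (NN G i p s * A s x) * NN G s q r) X Y Z := by
    rw [← tri_comp_right]
    refine Finset.sum_congr rfl fun p _ => Finset.sum_congr rfl fun s _ => ?_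
    ring
  have h2 : (∑ p, ∑ s, NN G i p s * (A p x * X p) * (∑ q, ∑ r, NN G s q r * Y q * Z r))
      = tri (fun p q r => ∑ s, (NN G i p s * A p x) * NN G s q r) X Y Z := by
    rw [← tri_comp_right]
    refine Finset.sum_congr rfl fun p _ => Finset.sum_congr rfl fun s _ => ?_
    ring
  have h4 : ∀ Y Z : Fin n → ℝ,
      (∑ s, ∑ r, NN G i s r * (∑ p, ∑ q, NN G s p q * X p * Y q) * (A r x * Z r))
      = tri (fun p q r => ∑ s, (NN G i s r * A r x) * NN G s p q) X Y Z := by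
    intro Y Z
    rw [← tri_comp_left]
    refine Finset.sum_congr rfl fun p _ => Finset.sum_congr rfl fun s _ => ?_
    ring
  have h5 : (∑ p, ∑ s, NN G i p s * X p * (∑ q, ∑ r, NN G s q r * (A q x * Y q) * Z r))
      = tri (fun p q r => ∑ s, NN G i p s * (NN G s q r * A q x)) X Y Z := by
    rw [← tri_comp_right]
    refine Finset.sum_congr rfl fun p _ => Finset.sum_congr rfl fun s _ => ?_
    congr 1
    refine Finset.sum_congr rfl fun q _ => Finset.sum_congr rfl fun r _ => ?_
    ring
  have h6 : (∑ p, ∑ s, NN G i p s * X p * (∑ q, ∑ r, NN G s q r * Y q * (A r x * Z r)))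
      = tri (fun p q r => ∑ s, NN G i p s * (NN G s q r * A r x)) X Y Z := by
    rw [← tri_comp_right]
    refine Finset.sum_congr rfl fun p _ => Finset.sum_congr rfl fun s _ => ?_
    congr 1
    refine Finset.sum_congr rfl fun q _ => Finset.sum_congr rfl fun r _ => ?_
    ring
  rw [h1, h2, h4 Z Y, h4 Y Z, h5, h6, tri_swap _ X Y Z]
  simp only [tri_add, tri_sub]
  congr 1
  funext p q r
  simp only [← mul_assoc, ← Finset.sum_mul, sum_NN]
  unfold MC
  ring

lemma T_diag {n : ℕ} (A : Fin n → (Fin n → ℝ) → ℝ) (x : Fin n → ℝ)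
    (hd : ∀ i, DifferentiableAt ℝ (A i) x) (hdd : ∀ i j, DifferentiableAt ℝ (pd (A i) j) x)
    (i a b c : Fin n) :
    (∑ s : Fin n,
    (nijTorsion (fun y => Matrix.diagonal (fun r => A r y)) x s a b
        * pd (fun y => ((Matrix.diagonal (fun r => A r y)) *
            (Matrix.diagonal (fun r => A r y)) : Matrix (Fin n) (Fin n) ℝ) i c) s x
      - ((Matrix.diagonal (fun r => A r x)) *
            (Matrix.diagonal (fun r => A r x)) : Matrix (Fin n) (Fin n) ℝ) s c
        * pd (fun y => nijTorsion (fun y => Matrix.diagonal (fun r => A r y)) y i a b) s x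
      - 2 * nijTorsion (fun y => Matrix.diagonal (fun r => A r y)) x i s b
        * pd (fun y => ((Matrix.diagonal (fun r => A r y)) *
            (Matrix.diagonal (fun r => A r y)) : Matrix (Fin n) (Fin n) ℝ) s c) a x
      + ((Matrix.diagonal (fun r => A r x)) *
            (Matrix.diagonal (fun r => A r x)) : Matrix (Fin n) (Fin n) ℝ) i s
        * pd (fun y => nijTorsion (fun y => Matrix.diagonal (fun r => A r y)) y s a b) c x))
    = TC (fun i => A i x) (fun i j => pd (A i) j x) (fun i j => (A j x - A i x) * pd (A i) j x)
       (fun i j k => (pd (A j) k x - pd (A i) k x) * pd (A i) j x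
          + (A j x - A i x) * pd (pd (A i) j) k x) i a b c := by
  have hG : ∀ i j s, pd (fun y => (A j y - A i y) * pd (A i) j y) s x =
      (pd (A j) s x - pd (A i) s x) * pd (A i) j x + (A j x - A i x) * pd (pd (A i) j) s x := by
    intro i j s
    have := (((hd j).hasFDerivAt.sub (hd i).hasFDerivAt).mul (hdd i j).hasFDerivAt).fderiv
    have h2 : pd (fun y => (A j y - A i y) * pd (A i) j y) s x
       = (fderiv ℝ ((A j - A i) * pd (A i) j) x) (Pi.single s 1) := rfl
    rw [h2, this]
    simp [pd]
    ring
  have hN : ∀ i a b s, pd (fun y => NN (fun i j => (A j y - A i y) * pd (A i) j y) i a b) s x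
      = NN (fun i j => (pd (A j) s x - pd (A i) s x) * pd (A i) j x
          + (A j x - A i x) * pd (pd (A i) j) s x) i a b := by
    intro i a b s
    have hz : ∀ j, DifferentiableAt ℝ (fun y => (A j y - A i y) * pd (A i) j y) x := by
      intro j
      exact ((hd j).sub (hd i)).mul (hdd i j)
    unfold NN
    have e : pd (fun y => (if i = b then (A a y - A i y) * pd (A i) a y else 0)
        - (if i = a then (A b y - A i y) * pd (A i) b y else 0)) s x
       = pd (fun y => (if i = b then (A a y - A i y) * pd (A i) a y else 0)) s x
        - pd (fun y => (if i = a then (A b y - A i y) * pd (A i) b y else 0)) s x := by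
      unfold pd
      rw [fderiv_fun_sub]
      · rfl
      · split_ifs
        · exact hz a
        · fun_prop
      · split_ifs
        · exact hz b
        · fun_prop
    rw [e, pd_ite, pd_ite, hG, hG]
  have hR : ∀ i s, pd (fun y => A i y * A i y) s x = 2 * A i x * pd (A i) s x := by
    intro i s
    unfold pd
    rw [fderiv_fun_mul (hd i) (hd i)]
    simp
    ring
  simp only [torsion_diag, hN, Matrix.diagonal_mul_diagonal, Matrix.diagonal_apply, pd_ite, hR]
  simp only [Finset.sum_add_distrib, Finset.sum_sub_distrib, ite_mul, mul_ite, zero_mul, mul_zero,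
    Finset.sum_ite_eq, Finset.sum_ite_eq', Finset.mem_univ, if_true]
  unfold TC
  have h1 : (∑ s, if i = c then NN (fun i j => (A j x - A i x) * pd (A i) j x) s a b *
      (2 * A i x * pd (A i) s x) else 0) = if i = c then
      2 * A i x * (((A a x - A b x) * pd (A b) a x) * pd (A i) b x
        - ((A b x - A a x) * pd (A a) b x) * pd (A i) a x) else 0 := by
    split_ifs
    · simp only [mul_comm (NN _ _ _ _), sum_NN]
      ring
    · simp
  rw [h1]
  ring

lemma K_diag {n : ℕ} (A : Fin n → (Fin n → ℝ) → ℝ) (x : Fin n → ℝ)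
    (hd : ∀ i, DifferentiableAt ℝ (A i) x) (hdd : ∀ i j, DifferentiableAt ℝ (pd (A i) j) x)
    (X Y Z : Fin n → ℝ) (i : Fin n) :
    Kmap (fun y => Matrix.diagonal (fun r => A r y)) x X Y Z i
    = tri (KC (fun i => A i x) (fun i j => pd (A i) j x)
       (fun i j => (A j x - A i x) * pd (A i) j x)
       (fun i j k => (pd (A j) k x - pd (A i) k x) * pd (A i) j x
          + (A j x - A i x) * pd (pd (A i) j) k x) i) X Y Z := by
  unfold Kmap tri nijBracket
  refine Finset.sum_congr rfl fun p _ => Finset.sum_congr rfl fun q _ =>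
    Finset.sum_congr rfl fun r _ => ?_
  congr 3
  rw [skew3_eq]
  simp only [T_diag A x hd hdd]
  unfold KC
  ring

lemma Q_diag {n : ℕ} (A : Fin n → (Fin n → ℝ) → ℝ) (x : Fin n → ℝ)
    (hd : ∀ i, DifferentiableAt ℝ (A i) x) (hdd : ∀ i j, DifferentiableAt ℝ (pd (A i) j) x)
    (X Y Z : Fin n → ℝ) (i : Fin n) :
    Qmap (fun y => Matrix.diagonal (fun r => A r y)) x X Y Z i
    = tri (QC (fun i => A i x) (fun i j => pd (A i) j x)
       (fun i j => (A j x - A i x) * pd (A i) j x)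
       (fun i j k => (pd (A j) k x - pd (A i) k x) * pd (A i) j x
          + (A j x - A i x) * pd (pd (A i) j) k x) i) X Y Z := by
  unfold Qmap
  have hm : ∀ (a : Fin n → ℝ) (W : Fin n → ℝ),
      (Matrix.diagonal a) *ᵥ W = fun s => a s * W s := by
    intro a W; ext s; simp [Matrix.mulVec_diagonal]
  simp only [K_diag A x hd hdd, M_diag, Matrix.diagonal_mul_diagonal, hm]
  generalize (fun i j => (A j x - A i x) * pd (A i) j x) = G
  generalize (fun i j k => (pd (A j) k x - pd (A i) k x) * pd (A i) j x
          + (A j x - A i x) * pd (pd (A i) j) k x) = H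
  unfold tri
  simp only [Finset.mul_sum, ← Finset.sum_add_distrib, ← Finset.sum_sub_distrib]
  refine Finset.sum_congr rfl fun p _ => Finset.sum_congr rfl fun q _ =>
    Finset.sum_congr rfl fun r _ => ?_
  unfold QC
  ring

lemma P_diag {n : ℕ} (A : Fin n → (Fin n → ℝ) → ℝ) (x : Fin n → ℝ)
    (hd : ∀ i, DifferentiableAt ℝ (A i) x) (hdd : ∀ i j, DifferentiableAt ℝ (pd (A i) j) x)
    (X Y Z : Fin n → ℝ) (i : Fin n) :
    Pmap (fun y => Matrix.diagonal (fun r => A r y)) x X Y Z i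
    = tri (fun p q r => -((A i x - A q x) * (A i x - A r x)) *
      QC (fun i => A i x) (fun i j => pd (A i) j x)
       (fun i j => (A j x - A i x) * pd (A i) j x)
       (fun i j k => (pd (A j) k x - pd (A i) k x) * pd (A i) j x
          + (A j x - A i x) * pd (pd (A i) j) k x) i p q r) X Y Z := by
  unfold Pmap
  have hm : ∀ (a : Fin n → ℝ) (W : Fin n → ℝ),
      (Matrix.diagonal a) *ᵥ W = fun s => a s * W s := by
    intro a W; ext s; simp [Matrix.mulVec_diagonal]
  simp only [Matrix.diagonal_mul_diagonal, hm, Q_diag A x hd hdd]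
  generalize QC _ _ _ _ i = C
  unfold tri
  simp only [Finset.mul_sum, ← Finset.sum_add_distrib, ← Finset.sum_sub_distrib]
  refine Finset.sum_congr rfl fun p _ => Finset.sum_congr rfl fun q _ =>
    Finset.sum_congr rfl fun r _ => ?_
  ring

end calc_at_point

/-- Components of `Q` off the diagonal vanish. -/
lemma QC_zero {n : ℕ} (a : Fin n → ℝ) (d G : Fin n → Fin n → ℝ)
    (H : Fin n → Fin n → Fin n → ℝ) (i p q r : Fin n) (hq : i ≠ q) (hr : i ≠ r)
    (h : i ≠ p ∨ q = r) : QC a d G H i p q r = 0 := by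
  by_cases hp : i = p
  · subst hp
    obtain rfl : q = r := by simpa using h
    simp [QC, KC, MC, TC, NN, hq]
    right
    ring
  · simp [QC, KC, MC, TC, NN, hq, hr, hp]

lemma QC_main {n : ℕ} (a : Fin n → ℝ) (d : Fin n → Fin n → ℝ)
    (h : Fin n → Fin n → Fin n → ℝ) (i j k : Fin n) (hij : i ≠ j) (hjk : j ≠ k) (hik : i ≠ k)
    (ha : a i ≠ a j) (ha' : a i ≠ a k) (hs : h i j k = h i k j) :
    QC a d (fun i j => (a j - a i) * d i j)
      (fun i j k => (d j k - d i k) * d i j + (a j - a i) * h i j k) i i j k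
    = -((a j - a i) * (a k - a i)) ^ 3 *
      (((a j - a i)⁻¹ * h i j k - (d j k - d i k) * ((a j - a i)⁻¹) ^ 2 * d i j)
       - ((a k - a i)⁻¹ * h i k j - (d k j - d i j) * ((a k - a i)⁻¹) ^ 2 * d i k)) := by
  have h1 : a j - a i ≠ 0 := sub_ne_zero.2 ha.symm
  have h2 : a k - a i ≠ 0 := sub_ne_zero.2 ha'.symm
  simp only [QC, KC, MC, TC, NN, hij, hjk, hik, hij.symm, hjk.symm, hik.symm, if_true, if_false, ← hs]
  field_simp
  ring

lemma pd_inv_mul {n : ℕ} (f g : (Fin n → ℝ) → ℝ) (x : Fin n → ℝ) (s : Fin n)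
    (hf : DifferentiableAt ℝ f x) (hg : DifferentiableAt ℝ g x) (h0 : f x ≠ 0) :
    pd (fun y => (f y)⁻¹ * g y) s x
      = (f x)⁻¹ * pd g s x - pd f s x * ((f x)⁻¹) ^ 2 * g x := by
  have hf' : DifferentiableAt ℝ (fun y => (f y)⁻¹) x := hf.inv h0
  have e : pd (fun y => (f y)⁻¹) s x = - pd f s x * ((f x)⁻¹) ^ 2 := by
    have := (hasFDerivAt_inv h0).comp x hf.hasFDerivAt
    have h2 : pd (fun y => (f y)⁻¹) s x
      = fderiv ℝ ((fun y : ℝ => y⁻¹) ∘ f) x (Pi.single s 1) := rfl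
    rw [h2, this.fderiv]
    simp [pd]
  have e2 : pd (fun y => (f y)⁻¹ * g y) s x
      = (f x)⁻¹ * pd g s x + g x * pd (fun y => (f y)⁻¹) s x := by
    unfold pd
    rw [fderiv_fun_mul hf' hg]
    simp
  rw [e2, e]
  ring

theorem P_vanishes_iff_semiHamiltonian {n : ℕ} (U : Set (Fin n → ℝ)) (hU : IsOpen U)
    (A : Fin n → (Fin n → ℝ) → ℝ)
    (hA : ∀ i, ContDiffOn ℝ (⊤ : ℕ∞) (A i) U)
    (hdist : ∀ i j : Fin n, i ≠ j → ∀ x ∈ U, A i x ≠ A j x) :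
    (∀ x ∈ U, ∀ X Y Z : Fin n → ℝ,
        Pmap (fun y => Matrix.diagonal (fun r => A r y)) x X Y Z = 0)
      ↔ (∀ i j k : Fin n, i ≠ j → j ≠ k → i ≠ k → ∀ x ∈ U,
          pd (fun y => (A j y - A i y)⁻¹ * pd (A i) j y) k x
            = pd (fun y => (A k y - A i y)⁻¹ * pd (A i) k y) j x) := by
  have hat : ∀ i, ∀ x ∈ U, ContDiffAt ℝ 2 (A i) x := fun i x hx =>
    ((hA i).contDiffAt (hU.mem_nhds hx)).of_le (WithTop.coe_le_coe.2 (le_top : (2 : ℕ∞) ≤ ⊤))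
  have hd : ∀ x ∈ U, ∀ i, DifferentiableAt ℝ (A i) x := fun x hx i =>
    (hat i x hx).differentiableAt (by norm_num)
  have hfd : ∀ x ∈ U, ∀ i, DifferentiableAt ℝ (fderiv ℝ (A i)) x := fun x hx i =>
    ((hat i x hx).fderiv_right (m := 1) (by norm_num)).differentiableAt (by norm_num)
  have hdd : ∀ x ∈ U, ∀ i j, DifferentiableAt ℝ (pd (A i) j) x := fun x hx i j =>
    (hfd x hx i).clm_apply (differentiableAt_const _)
  have hpp : ∀ x ∈ U, ∀ i j k, pd (pd (A i) j) k x
      = fderiv ℝ (fderiv ℝ (A i)) x (Pi.single k 1) (Pi.single j 1) := by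
    intro x hx i j k
    have := ((hfd x hx i).hasFDerivAt.clm_apply
      (hasFDerivAt_const (Pi.single j 1 : Fin n → ℝ) x)).fderiv
    have h2 : pd (pd (A i) j) k x
      = fderiv ℝ (fun y => fderiv ℝ (A i) y (Pi.single j 1)) x (Pi.single k 1) := rfl
    rw [h2, this]
    simp
  have hs : ∀ x ∈ U, ∀ i j k, pd (pd (A i) j) k x = pd (pd (A i) k) j x := by
    intro x hx i j k
    rw [hpp x hx, hpp x hx]
    exact (hat i x hx).isSymmSndFDerivAt (by simp) _ _
  have hpd : ∀ x ∈ U, ∀ i j k, i ≠ j → pd (fun y => (A j y - A i y)⁻¹ * pd (A i) j y) k x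
      = (A j x - A i x)⁻¹ * pd (pd (A i) j) k x
        - (pd (A j) k x - pd (A i) k x) * ((A j x - A i x)⁻¹) ^ 2 * pd (A i) j x := by
    intro x hx i j k hij
    rw [pd_inv_mul (fun y => A j y - A i y) _ x k ((hd x hx j).sub (hd x hx i)) (hdd x hx i j)
      (sub_ne_zero.2 (hdist j i hij.symm x hx))]
    congr 3
    unfold pd
    rw [fderiv_fun_sub (hd x hx j) (hd x hx i)]
    rfl
  constructor
  · intro hP i j k hij hjk hik x hx
    have h := congrFun (hP x hx (Pi.single i 1) (Pi.single j 1) (Pi.single k 1)) i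
    rw [P_diag A x (hd x hx) (hdd x hx), tri_single,
      QC_main (fun i => A i x) (fun i j => pd (A i) j x) (fun i j k => pd (pd (A i) j) k x)
        i j k hij hjk hik (hdist i j hij x hx) (hdist i k hik x hx) (hs x hx i j k)] at h
    rw [hpd x hx i j k hij, hpd x hx i k j hik]
    have n1 := sub_ne_zero.2 (hdist i j hij x hx)
    have n2 := sub_ne_zero.2 (hdist i k hik x hx)
    have n3 := sub_ne_zero.2 (hdist i j hij x hx).symm
    have n4 := sub_ne_zero.2 (hdist i k hik x hx).symm
    have n5 : -((A i x - A j x) * (A i x - A k x)) ≠ 0 := neg_ne_zero.2 (mul_ne_zero n1 n2)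
    have n6 : -((A j x - A i x) * (A k x - A i x)) ^ 3 ≠ 0 :=
      neg_ne_zero.2 (pow_ne_zero _ (mul_ne_zero n3 n4))
    rcases mul_eq_zero.1 h with h | h
    · exact absurd h n5
    · rcases mul_eq_zero.1 h with h | h
      · exact absurd h n6
      · exact sub_eq_zero.1 h
  · intro hT x hx X Y Z
    funext i
    rw [P_diag A x (hd x hx) (hdd x hx)]
    unfold tri
    refine Finset.sum_eq_zero fun p _ => Finset.sum_eq_zero fun q _ =>
      Finset.sum_eq_zero fun r _ => ?_
    dsimp only
    by_cases hq : i = q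
    · subst hq; simp
    by_cases hr : i = r
    · subst hr; simp
    by_cases h : i ≠ p ∨ q = r
    · rw [QC_zero _ _ _ _ _ _ _ _ hq hr h]; simp
    · push Not at h
      obtain ⟨rfl, hqr⟩ := h
      rw [QC_main (fun i => A i x) (fun i j => pd (A i) j x) (fun i j k => pd (pd (A i) j) k x)
        i q r hq hqr hr (hdist i q hq x hx) (hdist i r hr x hx) (hs x hx i q r)]
      have := hT i q r hq hqr hr x hx
      rw [hpd x hx i q r hq, hpd x hx i r q hr] at this
      rw [sub_eq_zero.2 this]
      simp
end

section
/- Let U ⊆ ℝⁿ be open and let A₁,…,Aₙ : U → ℝ be smooth, and set A(x) = diag(A₁(x),…,Aₙ(x)). Let N be the Nijenhuis torsion of A, let 𝒦 = 3[N, A²] (Nijenhuis bracket of the (1,2)-tensor field N with the (1,1)-tensor field A²), and define the (1,3)-tensor fields M, Q, P pointwise by M(X,Y,Z) = N(X, A N(Y,Z)) + N(AX, N(Y,Z)) − N(N(X,Z), AY) + N(N(X,Y), AZ) − N(X, N(AY,Z)) − N(X, N(Y,AZ)); Q(X,Y,Z) = 𝒦(AX,AY,Z) − 𝒦(A²X,Y,Z)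 − 𝒦(X,AY,AZ) + 𝒦(AX,Y,AZ) + 4M(AX,Y,Z) − 2M(X,AY,Z) − 2M(X,Y,AZ); P(X,Y,Z) = A Q(X,AY,Z) + A Q(X,Y,AZ) − A² Q(X,Y,Z) − Q(X,AY,AZ), for X,Y,Z ∈ ℝⁿ. Then the components of P satisfy P^i_{jkl}(x) = 0 for all x ∈ U whenever i ∉ {j,k,l}. -/
open scoped BigOperators
open Matrix

section helpers
variable {n : ℕ} (A : Fin n → (Fin n → ℝ) → ℝ)

theorem pd_zero_fun (j : Fin n) (x : Fin n → ℝ) : pd (fun _ => (0 : ℝ)) j x = 0 := by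
  simp [pd]

/-- The torsion of a diagonal operator vanishes when the upper index is not a lower one. -/
theorem nij_off (x : Fin n → ℝ) (i j k : Fin n) (hj : i ≠ j) (hk : i ≠ k) :
    nijTorsion (fun y => Matrix.diagonal (fun r => A r y)) x i j k = 0 := by
  unfold nijTorsion
  apply Finset.sum_eq_zero
  intro s _
  by_cases hs : i = s
  · subst hs
    simp [Matrix.diagonal_apply_ne _ hj, Matrix.diagonal_apply_ne _ hk, pd_zero_fun]
  · simp [Matrix.diagonal_apply_ne _ hj, Matrix.diagonal_apply_ne _ hk,
      Matrix.diagonal_apply_ne _ hs, pd_zero_fun]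

theorem bracket_off (x : Fin n → ℝ) (i j k l : Fin n) (hj : i ≠ j) (hk : i ≠ k) (hl : i ≠ l) :
    nijBracket (nijTorsion (fun y => Matrix.diagonal (fun r => A r y)))
      (fun y => Matrix.diagonal (fun r => A r y) * Matrix.diagonal (fun r => A r y))
      x i j k l = 0 := by
  have key : ∀ a b c : Fin n, i ≠ a → i ≠ b → i ≠ c →
      ∑ s : Fin n,
      (nijTorsion (fun y => Matrix.diagonal (fun r => A r y)) x s a b *
          pd (fun y => (Matrix.diagonal (fun r => A r y) * Matrix.diagonal (fun r => A r y)) i c) s x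
      - (Matrix.diagonal (fun r => A r x) * Matrix.diagonal (fun r => A r x)) s c *
          pd (fun y => nijTorsion (fun y => Matrix.diagonal (fun r => A r y)) y i a b) s x
      - 2 * nijTorsion (fun y => Matrix.diagonal (fun r => A r y)) x i s b *
          pd (fun y => (Matrix.diagonal (fun r => A r y) * Matrix.diagonal (fun r => A r y)) s c) a x
      + (Matrix.diagonal (fun r => A r x) * Matrix.diagonal (fun r => A r x)) i s *
          pd (fun y => nijTorsion (fun y => Matrix.diagonal (fun r => A r y)) y s a b) c x) = 0 := by
    intro a b c ha hb hc
    apply Finset.sum_eq_zero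
    intro s _
    simp only [Matrix.diagonal_mul_diagonal, Matrix.diagonal_apply_ne _ hc, pd_zero_fun,
      nij_off A _ i a b ha hb]
    by_cases hs : i = s
    · subst hs
      simp [Matrix.diagonal_apply_ne _ hc, pd_zero_fun, nij_off A _ i a b ha hb]
    · simp [Matrix.diagonal_apply_ne _ hs, nij_off A _ i s b hs hb]
  have hv : ∀ m : Fin 3, i ≠ ![j, k, l] m := by
    intro m
    fin_cases m
    exacts [hj, hk, hl]
  unfold nijBracket skew3
  rw [Finset.sum_eq_zero, mul_zero]
  intro π _
  exact mul_eq_zero_of_right _ (key _ _ _ (hv _) (hv _) (hv _))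

theorem Nmap_off (x X Y : Fin n → ℝ) (i : Fin n) (hX : X i = 0) (hY : Y i = 0) :
    Nmap (fun y => Matrix.diagonal (fun r => A r y)) x X Y i = 0 := by
  unfold Nmap
  refine Finset.sum_eq_zero fun j _ => Finset.sum_eq_zero fun k _ => ?_
  by_cases hj : i = j
  · subst hj; simp [hX]
  by_cases hk : i = k
  · subst hk; simp [hY]
  simp [nij_off A x i j k hj hk]

theorem Kmap_off (x X Y Z : Fin n → ℝ) (i : Fin n) (hX : X i = 0) (hY : Y i = 0) (hZ : Z i = 0) :
    Kmap (fun y => Matrix.diagonal (fun r => A r y)) x X Y Z i = 0 := by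
  unfold Kmap
  refine Finset.sum_eq_zero fun j _ => Finset.sum_eq_zero fun k _ =>
    Finset.sum_eq_zero fun l _ => ?_
  by_cases hj : i = j
  · subst hj; simp [hX]
  by_cases hk : i = k
  · subst hk; simp [hY]
  by_cases hl : i = l
  · subst hl; simp [hZ]
  rw [bracket_off A x i j k l hj hk hl]
  simp

theorem diag_off (d X : Fin n → ℝ) (i : Fin n) (hX : X i = 0) :
    (Matrix.diagonal d *ᵥ X) i = 0 := by
  simp [Matrix.mulVec_diagonal, hX]

theorem Mmap_off (x X Y Z : Fin n → ℝ) (i : Fin n) (hX : X i = 0) (hY : Y i = 0) (hZ : Z i = 0) :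
    Mmap (fun y => Matrix.diagonal (fun r => A r y)) x X Y Z i = 0 := by
  simp (maxDischargeDepth := 8) [Mmap, Nmap_off, diag_off, hX, hY, hZ]

theorem Qmap_off (x X Y Z : Fin n → ℝ) (i : Fin n) (hX : X i = 0) (hY : Y i = 0) (hZ : Z i = 0) :
    Qmap (fun y => Matrix.diagonal (fun r => A r y)) x X Y Z i = 0 := by
  simp only [Qmap, Matrix.diagonal_mul_diagonal]
  simp (maxDischargeDepth := 8) [Kmap_off, Mmap_off, diag_off, hX, hY, hZ]

theorem Pmap_off (x X Y Z : Fin n → ℝ) (i : Fin n) (hX : X i = 0) (hY : Y i = 0) (hZ : Z i = 0) :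
    Pmap (fun y => Matrix.diagonal (fun r => A r y)) x X Y Z i = 0 := by
  simp only [Pmap, Matrix.diagonal_mul_diagonal]
  simp (maxDischargeDepth := 8) [Qmap_off, diag_off, hX, hY, hZ]

end helpers

theorem P_components_vanish_off_index {n : ℕ} (U : Set (Fin n → ℝ)) (hU : IsOpen U)
    (A : Fin n → (Fin n → ℝ) → ℝ)
    (hA : ∀ i, ContDiffOn ℝ (⊤ : ℕ∞) (A i) U) :
    ∀ x ∈ U, ∀ i j k l : Fin n, i ≠ j → i ≠ k → i ≠ l →
      Pmap (fun y => Matrix.diagonal (fun r => A r y)) x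
        (Pi.single j 1) (Pi.single k 1) (Pi.single l 1) i = 0 := by
  intro x _ i j k l hj hk hl
  exact Pmap_off A x _ _ _ i (by simp [hj]) (by simp [hk]) (by simp [hl])
end
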